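/- arXiv:1208.0161 — 2 statements merged into one kernel-verified Lean document; each statement's English description precedes it below -/
import Mathlib

section
/- Let f : (ℝ^{n+1})^k → ℝ be a polynomial which has degree at most d in the components of each of its k blocks of variables x^1, …, x^k ∈ ℝ^{n+1}. Then for any q ≥ 2, ‖f‖_{L^q((S^n)^k)} ≤ (q−1)^{dk/2} ‖f‖_{L^2((S^n)^k)}. -/
noncomputable section

open MeasureTheory

namespace SphereHC
open MeasureTheory

/-- auxiliary: `(1+y)^s - (1-y)^s ≤ s y ((1+y)^s + (1-y)^s)` for `s ≥ 1`, `0 ≤ y ≤ 1`. -/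
lemma tp_aux (s : ℝ) (hs : 1 ≤ s) (y : ℝ) (hy0 : 0 ≤ y) (hy1 : y ≤ 1) :
    (1 + y) ^ s - (1 - y) ^ s ≤ s * y * ((1 + y) ^ s + (1 - y) ^ s) := by
  let ψ : ℝ → ℝ := fun y => s * y * ((1 + y) ^ s + (1 - y) ^ s) - ((1 + y) ^ s - (1 - y) ^ s)
  have hmono : MonotoneOn ψ (Set.Icc 0 1) := by
    refine monotoneOn_of_hasDerivWithinAt_nonneg (f' := fun y => (s * 1) * ((1 + y) ^ s + (1 - y) ^ s)
        + s * y * ((1 * s * (1 + y) ^ (s - 1)) + (-1 * s * (1 - y) ^ (s - 1)))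
        - ((1 * s * (1 + y) ^ (s - 1)) - (-1 * s * (1 - y) ^ (s - 1))))
      (convex_Icc 0 1) ?_ ?_ ?_
    · have : Continuous ψ := by
        have h1 : Continuous fun y : ℝ => (1 + y) ^ s :=
          (continuous_const.add continuous_id).rpow_const (fun _ => Or.inr (by linarith))
        have h2 : Continuous fun y : ℝ => (1 - y) ^ s :=
          (continuous_const.sub continuous_id).rpow_const (fun _ => Or.inr (by linarith))
        fun_prop
      exact this.continuousOn
    · intro x hx
      rw [interior_Icc] at hx
      have h1 : HasDerivAt (fun y : ℝ => (1 + y) ^ s) (1 * s * (1 + x) ^ (s - 1)) x :=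
        ((hasDerivAt_id x).const_add 1).rpow_const (Or.inr hs)
      have h2 : HasDerivAt (fun y : ℝ => (1 - y) ^ s) (-1 * s * (1 - x) ^ (s - 1)) x :=
        ((hasDerivAt_id x).const_sub 1).rpow_const (Or.inr hs)
      have h3 := ((((hasDerivAt_id x).const_mul s).mul (h1.add h2)).sub (h1.sub h2))
      exact h3.hasDerivWithinAt
    · intro x hx
      rw [interior_Icc] at hx
      obtain ⟨hx0, hx1⟩ := hx
      have hs0 : 0 < s := by linarith
      have e1 : (1 + x) ^ s = (1 + x) * (1 + x) ^ (s - 1) := by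
        rw [Real.rpow_sub_one (by linarith)]; field_simp
      have e2 : (1 - x) ^ s = (1 - x) * (1 - x) ^ (s - 1) := by
        rw [Real.rpow_sub_one (by linarith)]; field_simp
      have e3 : (1 - x) ^ (s - 1) ≤ (1 + x) ^ (s - 1) :=
        Real.rpow_le_rpow (by linarith) (by linarith) (by linarith)
      show 0 ≤ _
      rw [e1, e2]
      have := mul_nonneg (mul_nonneg (by positivity : 0 ≤ s * (1 + s)) hx0.le) (sub_nonneg.2 e3)
      nlinarith [this]
  have := hmono (Set.left_mem_Icc.2 zero_le_one) ⟨hy0, hy1⟩ hy0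
  simp only [ψ] at this
  simp at this
  linarith

lemma tp_unit (q : ℝ) (hq : 2 ≤ q) (y : ℝ) (hy0 : 0 ≤ y) (hy1 : y ≤ 1) :
    ((1 + y) ^ q + (1 - y) ^ q) / 2 ≤ (1 + (q - 1) * y ^ 2) ^ (q / 2) := by
  let G : ℝ → ℝ := fun y => ((1 + y) ^ q + (1 - y) ^ q) * (1 + (q - 1) * y ^ 2) ^ (-(q / 2))
  have hpos : ∀ x : ℝ, 0 < 1 + (q - 1) * x ^ 2 := fun x => by nlinarith [sq_nonneg x]
  have hanti : AntitoneOn G (Set.Icc 0 1) := by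
    refine antitoneOn_of_hasDerivWithinAt_nonpos (f' := fun y =>
        ((1 * q * (1 + y) ^ (q - 1)) + (-1 * q * (1 - y) ^ (q - 1))) *
          (1 + (q - 1) * y ^ 2) ^ (-(q / 2))
        + ((1 + y) ^ q + (1 - y) ^ q) *
          ((q - 1) * (2 * y) * (-(q / 2)) * (1 + (q - 1) * y ^ 2) ^ (-(q / 2) - 1)))
      (convex_Icc 0 1) ?_ ?_ ?_
    · have : Continuous G := by
        have h1 : Continuous fun y : ℝ => (1 + y) ^ q :=
          (continuous_const.add continuous_id).rpow_const (fun _ => Or.inr (by linarith))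
        have h2 : Continuous fun y : ℝ => (1 - y) ^ q :=
          (continuous_const.sub continuous_id).rpow_const (fun _ => Or.inr (by linarith))
        have h3 : Continuous fun y : ℝ => (1 + (q - 1) * y ^ 2) ^ (-(q / 2)) :=
          Continuous.rpow_const (by fun_prop) (fun x => Or.inl (hpos x).ne')
        fun_prop
      exact this.continuousOn
    · intro x hx
      have h1 : HasDerivAt (fun y : ℝ => (1 + y) ^ q) (1 * q * (1 + x) ^ (q - 1)) x :=
        ((hasDerivAt_id x).const_add 1).rpow_const (Or.inr (by linarith))
      have h2 : HasDerivAt (fun y : ℝ => (1 - y) ^ q) (-1 * q * (1 - x) ^ (q - 1)) x :=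
        ((hasDerivAt_id x).const_sub 1).rpow_const (Or.inr (by linarith))
      have h3 : HasDerivAt (fun y : ℝ => 1 + (q - 1) * y ^ 2) ((q - 1) * (2 * x)) x := by
        have := ((hasDerivAt_pow 2 x).const_mul (q - 1)).const_add 1
        simpa using this
      have h4 := h3.rpow_const (p := -(q / 2)) (Or.inl (hpos x).ne')
      exact ((h1.add h2).mul h4).hasDerivWithinAt
    · intro x hx
      rw [interior_Icc] at hx
      obtain ⟨hx0, hx1⟩ := hx
      have e1 : (1 + x) ^ q = (1 + x) * (1 + x) ^ (q - 1) := by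
        rw [Real.rpow_sub_one (by linarith)]; field_simp
      have e2 : (1 - x) ^ q = (1 - x) * (1 - x) ^ (q - 1) := by
        rw [Real.rpow_sub_one (by linarith)]; field_simp
      have e3 : (1 + (q - 1) * x ^ 2) ^ (-(q / 2))
          = (1 + (q - 1) * x ^ 2) * (1 + (q - 1) * x ^ 2) ^ (-(q / 2) - 1) := by
        rw [Real.rpow_sub_one (hpos x).ne', mul_div_cancel₀ _ (hpos x).ne']
      have key := tp_aux (q - 1) (by linarith) x hx0.le hx1.le
      show _ ≤ 0
      rw [e1, e2, e3]
      have hW : 0 < (1 + (q - 1) * x ^ 2) ^ (-(q / 2) - 1) := Real.rpow_pos_of_pos (hpos x) _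
      generalize (1 + (q - 1) * x ^ 2) ^ (-(q / 2) - 1) = W at *
      generalize (1 + x) ^ (q - 1) = u at *
      generalize (1 - x) ^ (q - 1) = v at *
      have : 0 ≤ q * W * ((q - 1) * x * (u + v) - (u - v)) :=
        mul_nonneg (mul_nonneg (by linarith) hW.le) (by linarith)
      nlinarith [this]
  have h := hanti (Set.left_mem_Icc.2 zero_le_one) ⟨hy0, hy1⟩ hy0
  simp only [G] at h
  rw [Real.rpow_neg (hpos y).le, ← div_eq_mul_inv, div_le_iff₀ (Real.rpow_pos_of_pos (hpos y) _)] at h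
  norm_num at h
  linarith

/-- two point inequality -/
lemma two_point (q : ℝ) (hq : 2 ≤ q) (a b : ℝ) :
    (|a + b| ^ q + |a - b| ^ q) / 2 ≤ (a ^ 2 + (q - 1) * b ^ 2) ^ (q / 2) := by
  -- case 0 ≤ b ≤ a
  have h1 : ∀ a b : ℝ, 0 ≤ b → b ≤ a →
      (|a + b| ^ q + |a - b| ^ q) / 2 ≤ (a ^ 2 + (q - 1) * b ^ 2) ^ (q / 2) := by
    intro a b hb hab
    rcases (hb.trans hab).eq_or_lt with h0 | h0
    · have : b = 0 := by linarith
      subst this; subst h0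
      simp
      rw [Real.zero_rpow (by linarith), Real.zero_rpow (by linarith)]
    · have ht := tp_unit q hq (b / a) (by positivity) ((div_le_one h0).2 hab)
      have e1 : |a + b| ^ q = a ^ q * (1 + b / a) ^ q := by
        rw [abs_of_nonneg (by linarith), ← Real.mul_rpow h0.le (by positivity)]
        congr 1; field_simp
      have e2 : |a - b| ^ q = a ^ q * (1 - b / a) ^ q := by
        rw [abs_of_nonneg (by linarith), ← Real.mul_rpow h0.le (sub_nonneg.2 ((div_le_one h0).2 hab))]
        congr 1; field_simp
      have e3 : (a ^ 2 + (q - 1) * b ^ 2) ^ (q / 2)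
          = a ^ q * (1 + (q - 1) * (b / a) ^ 2) ^ (q / 2) := by
        have : a ^ q = (a ^ 2) ^ (q / 2) := by
          rw [← Real.rpow_natCast, ← Real.rpow_mul h0.le]; congr 1; push_cast; ring
        rw [this, ← Real.mul_rpow (by positivity)
          (by have := mul_nonneg (by linarith : 0 ≤ q - 1) (sq_nonneg (b / a)); linarith)]
        congr 1; field_simp
      rw [e1, e2, e3]
      have := mul_le_mul_of_nonneg_left ht (Real.rpow_nonneg h0.le q)
      linarith
  have h2 : ∀ a b : ℝ, 0 ≤ b → 0 ≤ a →
      (|a + b| ^ q + |a - b| ^ q) / 2 ≤ (a ^ 2 + (q - 1) * b ^ 2) ^ (q / 2) := by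
    intro a b hb ha
    rcases le_total b a with h | h
    · exact h1 a b hb h
    · have := h1 b a ha h
      rw [add_comm b a, abs_sub_comm b a] at this
      refine this.trans (Real.rpow_le_rpow ?_ ?_ (by linarith))
      · have := mul_nonneg (by linarith : 0 ≤ q - 1) (sq_nonneg a); nlinarith [sq_nonneg b]
      · have : a ^ 2 ≤ b ^ 2 := by nlinarith
        nlinarith
  have h3 := h2 |a| |b| (abs_nonneg _) (abs_nonneg _)
  rw [sq_abs, sq_abs] at h3
  refine le_trans (le_of_eq ?_) h3
  rcases abs_cases a with ⟨ha, _⟩ | ⟨ha, _⟩ <;> rcases abs_cases b with ⟨hb, _⟩ | ⟨hb, _⟩ <;>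
    rw [ha, hb]
  · rw [← sub_eq_add_neg, sub_neg_eq_add, add_comm (|a + b| ^ q)]
  · rw [show -a + b = -(a - b) by ring, show -a - b = -(a + b) by ring, abs_neg, abs_neg, add_comm (|a + b| ^ q)]
  · rw [show -a + -b = -(a + b) by ring, show -a - -b = -(a - b) by ring, abs_neg, abs_neg]

end SphereHC

namespace SphereHC
open MeasureTheory
open scoped ENNReal

/-- Minkowski integral inequality, `ℝ≥0∞`-valued. -/
lemma minkowski_lintegral {X Y : Type*} [MeasurableSpace X] [MeasurableSpace Y]
    (μ : Measure X) (ν : Measure Y) [SFinite μ] [SFinite ν] (p : ℝ) (hp : 1 ≤ p)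
    (G : X → Y → ℝ≥0∞) (hG : Measurable (Function.uncurry G))
    (hfin : ∫⁻ y, (∫⁻ x, G x y ∂μ) ^ p ∂ν ≠ ∞) :
    (∫⁻ y, (∫⁻ x, G x y ∂μ) ^ p ∂ν) ^ (1 / p) ≤ ∫⁻ x, (∫⁻ y, (G x y) ^ p ∂ν) ^ (1 / p) ∂μ := by
  rcases hp.eq_or_lt with rfl | hp1
  · simp only [ENNReal.rpow_one, div_one]
    rw [lintegral_lintegral_swap (f := G) hG.aemeasurable]
  set H : Y → ℝ≥0∞ := fun y => ∫⁻ x, G x y ∂μ with hH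
  have hHm : Measurable H := (hG.comp measurable_swap).lintegral_prod_right'
  set A := ∫⁻ y, (H y) ^ p ∂ν with hA
  have hp0 : 0 < p := by linarith
  by_cases hA0 : A = 0
  · rw [hA0, ENNReal.zero_rpow_of_pos (by positivity)]; exact zero_le
  obtain ⟨p', hpp⟩ : ∃ p', p.HolderConjugate p' := ⟨_, Real.HolderConjugate.conjExponent hp1⟩
  have e1 : A = ∫⁻ x, ∫⁻ y, G x y * (H y) ^ (p - 1) ∂ν ∂μ := by
    rw [lintegral_lintegral_swap]
    · refine lintegral_congr fun y => ?_
      have hGy : Measurable fun x => G x y := hG.comp (measurable_id.prodMk measurable_const)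
      rw [lintegral_mul_const _ hGy]
      change H y ^ p = H y * H y ^ (p - 1)
      conv_lhs => rw [show p = 1 + (p - 1) by ring]
      rw [ENNReal.rpow_add_of_nonneg _ _ (by norm_num) (by linarith), ENNReal.rpow_one]
    · exact (hG.mul ((hHm.comp measurable_snd).pow_const _)).aemeasurable
  have e2 : A ≤ ∫⁻ x, (∫⁻ y, (G x y) ^ p ∂ν) ^ (1 / p) * A ^ (1 / p') ∂μ := by
    conv_lhs => rw [e1]
    refine lintegral_mono fun x => ?_
    have := ENNReal.lintegral_mul_le_Lp_mul_Lq ν hpp (f := fun y => G x y)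
      (g := fun y => (H y) ^ (p - 1))
      (hG.comp (measurable_const.prodMk measurable_id)).aemeasurable (hHm.pow_const _).aemeasurable
    refine this.trans (le_of_eq ?_)
    congr 3
    funext y
    rw [← ENNReal.rpow_mul, hpp.sub_one_mul_conj]
  rw [lintegral_mul_const _ (by
    have : Measurable fun z : X × Y => (G z.1 z.2) ^ p := hG.pow_const _
    exact this.lintegral_prod_right'.pow_const _)] at e2
  have hAp : A ^ (1 / p') ≠ 0 := by
    simp [ENNReal.rpow_eq_zero_iff, hA0, hfin]
  have hAp' : A ^ (1 / p') ≠ ∞ := ENNReal.rpow_ne_top_of_nonneg (by have := hpp.symm.pos; positivity) hfin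
  have e3 : A = A ^ (1 / p) * A ^ (1 / p') := by
    rw [← ENNReal.rpow_add _ _ hA0 hfin]
    have := hpp.inv_add_inv_eq_one
    rw [one_div, one_div, this, ENNReal.rpow_one]
  conv_lhs at e2 => rw [e3]
  exact (ENNReal.mul_le_mul_iff_left hAp hAp').1 e2

lemma minkowski_add {α : Type*} [MeasurableSpace α] (ν : Measure α) (p : ℝ) (hp : 1 ≤ p)
    (u w : α → ℝ) (hu0 : ∀ x, 0 ≤ u x) (hw0 : ∀ x, 0 ≤ w x)
    (hum : AEStronglyMeasurable u ν) (hwm : AEStronglyMeasurable w ν)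
    (hu : Integrable (fun x => u x ^ p) ν) (hw : Integrable (fun x => w x ^ p) ν) :
    (∫ x, (u x + w x) ^ p ∂ν) ^ (1 / p) ≤
      (∫ x, u x ^ p ∂ν) ^ (1 / p) + (∫ x, w x ^ p ∂ν) ^ (1 / p) := by
  have hp0 : 0 < p := by linarith
  have hP0 : ENNReal.ofReal p ≠ 0 := by simpa using hp0
  have hPt : ENNReal.ofReal p ≠ ∞ := ENNReal.ofReal_ne_top
  have hPr : (ENNReal.ofReal p).toReal = p := ENNReal.toReal_ofReal hp0.le
  have hmem : ∀ f : α → ℝ, (∀ x, 0 ≤ f x) → AEStronglyMeasurable f ν →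
      Integrable (fun x => f x ^ p) ν → MemLp f (ENNReal.ofReal p) ν := by
    intro f hf0 hfm hf
    rw [← integrable_norm_rpow_iff hfm hP0 hPt, hPr]
    refine hf.congr (Filter.Eventually.of_forall fun x => ?_)
    simp [abs_of_nonneg (hf0 x)]
  have hnorm : ∀ f : α → ℝ, (∀ x, 0 ≤ f x) → MemLp f (ENNReal.ofReal p) ν →
      (eLpNorm f (ENNReal.ofReal p) ν) = ENNReal.ofReal ((∫ x, f x ^ p ∂ν) ^ (1 / p)) := by
    intro f hf0 hf
    rw [hf.eLpNorm_eq_integral_rpow_norm hP0 hPt, hPr, one_div]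
    congr 2
    refine integral_congr_ae (Filter.Eventually.of_forall fun x => ?_)
    simp [abs_of_nonneg (hf0 x)]
  have hu' := hmem u hu0 hum hu
  have hw' := hmem w hw0 hwm hw
  have h := eLpNorm_add_le hum hwm (p := ENNReal.ofReal p) (by simpa using hp)
  have hnn : ∀ f : α → ℝ, (∀ x, 0 ≤ f x) → 0 ≤ (∫ x, f x ^ p ∂ν) ^ (1 / p) := fun f hf =>
    Real.rpow_nonneg (integral_nonneg fun x => Real.rpow_nonneg (hf x) _) _
  rw [hnorm (u + w) (fun x => add_nonneg (hu0 x) (hw0 x)) (hu'.add hw'), hnorm u hu0 hu',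
    hnorm w hw0 hw', ← ENNReal.ofReal_add (hnn u hu0) (hnn w hw0),
    ENNReal.ofReal_le_ofReal_iff (add_nonneg (hnn u hu0) (hnn w hw0))] at h
  exact h

lemma sq_rpow_half (q x : ℝ) : (x ^ 2) ^ (q / 2) = |x| ^ q := by
  rw [← sq_abs, ← Real.rpow_natCast, ← Real.rpow_mul (abs_nonneg x)]
  congr 1; push_cast; ring

/-- the induction step combining two parts. -/
lemma comb {α : Type*} [MeasurableSpace α] (ν : Measure α) (q : ℝ) (hq : 2 ≤ q) (d : ℕ)
    (a b : α → ℝ) (ham : AEStronglyMeasurable a ν) (hbm : AEStronglyMeasurable b ν)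
    (ha : Integrable (fun x => |a x| ^ q) ν) (hb : Integrable (fun x => |b x| ^ q) ν)
    (I : ℝ) (hI0 : 0 ≤ I)
    (hF : I ≤ ∫ x, (a x ^ 2 + (q - 1) * b x ^ 2) ^ (q / 2) ∂ν)
    (hA : (∫ x, |a x| ^ q ∂ν) ^ (2 / q) ≤ (q - 1) ^ d * ∫ x, a x ^ 2 ∂ν)
    (hB : (q - 1) * (∫ x, |b x| ^ q ∂ν) ^ (2 / q) ≤ (q - 1) ^ d * ∫ x, b x ^ 2 ∂ν) :
    I ^ (2 / q) ≤ (q - 1) ^ d * (∫ x, a x ^ 2 ∂ν + ∫ x, b x ^ 2 ∂ν) := by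
  have hq1 : 0 ≤ q - 1 := by linarith
  have hq0 : 0 < q := by linarith
  have eb : ∀ x, ((q - 1) * b x ^ 2) ^ (q / 2) = (q - 1) ^ (q / 2) * |b x| ^ q := by
    intro x
    rw [Real.mul_rpow hq1 (sq_nonneg _), sq_rpow_half]
  have h := minkowski_add ν (q / 2) (by linarith) (fun x => a x ^ 2) (fun x => (q - 1) * b x ^ 2)
    (fun x => sq_nonneg _) (fun x => mul_nonneg hq1 (sq_nonneg _)) (ham.pow 2)
    ((hbm.pow 2).const_mul _) (by simpa only [sq_rpow_half] using ha)
    (by simp only [eb]; exact hb.const_mul _)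
  simp only [eb, sq_rpow_half, integral_const_mul] at h
  rw [one_div_div, Real.mul_rpow (Real.rpow_nonneg hq1 _)
    (integral_nonneg fun x => Real.rpow_nonneg (abs_nonneg _) _), ← Real.rpow_mul hq1,
    show q / 2 * (2 / q) = 1 by field_simp, Real.rpow_one] at h
  have h1 := Real.rpow_le_rpow hI0 hF (by positivity : 0 ≤ 2 / q)
  rw [mul_add]
  linarith

end SphereHC

namespace SphereHC
open MeasureTheory
open scoped ENNReal

/-- polynomial functions of degree at most `d` -/
inductive IsPol {n : ℕ} : ℕ → (EuclideanSpace ℝ (Fin n) → ℝ) → Prop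
  | const (d : ℕ) (c : ℝ) : IsPol d (fun _ => c)
  | add {d : ℕ} {f g : EuclideanSpace ℝ (Fin n) → ℝ} :
      IsPol d f → IsPol d g → IsPol d (fun x => f x + g x)
  | coord {d : ℕ} {f : EuclideanSpace ℝ (Fin n) → ℝ} (i : Fin n) :
      IsPol d f → IsPol (d + 1) (fun x => x i * f x)

/-- homogeneous polynomial functions of degree `d` -/
inductive IsHom {n : ℕ} : ℕ → (EuclideanSpace ℝ (Fin n) → ℝ) → Prop
  | const (c : ℝ) : IsHom 0 (fun _ => c)
  | zero (d : ℕ) : IsHom d (fun _ => 0)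
  | add {d : ℕ} {f g : EuclideanSpace ℝ (Fin n) → ℝ} :
      IsHom d f → IsHom d g → IsHom d (fun x => f x + g x)
  | coord {d : ℕ} {f : EuclideanSpace ℝ (Fin n) → ℝ} (i : Fin n) :
      IsHom d f → IsHom (d + 1) (fun x => x i * f x)

variable {n : ℕ}

lemma IsPol.continuous {d : ℕ} {f : EuclideanSpace ℝ (Fin n) → ℝ} (h : IsPol d f) :
    Continuous f := by
  induction h with
  | const d c => exact continuous_const
  | add _ _ h1 h2 => exact h1.add h2
  | coord i _ h => exact (by fun_prop : Continuous fun x : EuclideanSpace ℝ (Fin n) => x i).mul h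

lemma IsPol.mono {d : ℕ} {f : EuclideanSpace ℝ (Fin n) → ℝ} (h : IsPol d f) :
    ∀ {e : ℕ}, d ≤ e → IsPol e f := by
  induction h with
  | const d c => intro e _; exact .const e c
  | add _ _ h1 h2 => intro e he; exact .add (h1 he) (h2 he)
  | coord i _ h =>
    intro e he
    obtain ⟨e', rfl⟩ : ∃ e', e = e' + 1 := ⟨e - 1, by omega⟩
    exact .coord i (h (by omega))

lemma IsPol.const_mul {d : ℕ} {f : EuclideanSpace ℝ (Fin n) → ℝ} (h : IsPol d f) (c : ℝ) :
    IsPol d (fun x => c * f x) := by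
  induction h with
  | const d c' => exact .const d (c * c')
  | add _ _ h1 h2 => simp only [mul_add]; exact .add h1 h2
  | coord i _ h => simp only [mul_left_comm c]; exact .coord i h

lemma IsPol.sum {ι : Type*} (s : Finset ι) {d : ℕ} {f : ι → EuclideanSpace ℝ (Fin n) → ℝ}
    (h : ∀ i ∈ s, IsPol d (f i)) : IsPol d (fun x => ∑ i ∈ s, f i x) := by
  classical
  induction s using Finset.induction_on with
  | empty => simpa using IsPol.const d 0
  | insert a s ha ih =>
    simp only [Finset.sum_insert ha]
    exact .add (h a (Finset.mem_insert_self a s)) (ih fun i hi => h i (Finset.mem_insert_of_mem hi))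

lemma IsPol.coord_pow {d : ℕ} {f : EuclideanSpace ℝ (Fin n) → ℝ} (h : IsPol d f) (i : Fin n)
    (m : ℕ) : IsPol (m + d) (fun x => x i ^ m * f x) := by
  induction m with
  | zero => simpa using h
  | succ m ih =>
    have := IsPol.coord i ih
    rw [show m + 1 + d = m + d + 1 by ring]
    convert this using 2
    ring

lemma IsPol.prod_pow (s : Finset (Fin n)) (m : Fin n → ℕ) :
    IsPol (∑ i ∈ s, m i) (fun x : EuclideanSpace ℝ (Fin n) => ∏ i ∈ s, x i ^ m i) := by
  classical
  induction s using Finset.induction_on with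
  | empty => simpa using IsPol.const 0 1
  | insert a s ha ih =>
    simp only [Finset.prod_insert ha, Finset.sum_insert ha]
    exact ih.coord_pow a (m a)

/-- even and odd parts in direction `v` -/
lemma IsPol.split {d : ℕ} {f : EuclideanSpace ℝ (Fin n) → ℝ} (h : IsPol d f)
    (v : EuclideanSpace ℝ (Fin n)) :
    IsPol d (fun x => (f (x + v) + f (x - v)) / 2) ∧
    (d = 0 → ∀ x, (f (x + v) - f (x - v)) / 2 = 0) ∧
    (∀ e, d ≤ e + 1 → IsPol e (fun x => (f (x + v) - f (x - v)) / 2)) := by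
  induction h with
  | const d c =>
    refine ⟨?_, ?_, ?_⟩
    · simpa using IsPol.const d c
    · simp
    · intro e _; simpa using IsPol.const e 0
  | @add d f g _ _ h1 h2 =>
    obtain ⟨a1, b1, c1⟩ := h1
    obtain ⟨a2, b2, c2⟩ := h2
    refine ⟨?_, ?_, ?_⟩
    · convert a1.add a2 using 2; ring
    · intro h0 x
      have := b1 h0 x
      have := b2 h0 x
      linarith
    · intro e he
      convert (c1 e he).add (c2 e he) using 2; ring
  | @coord d f i _ h =>
    obtain ⟨a, b, c⟩ := h
    refine ⟨?_, by omega, ?_⟩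
    · have h1 := (IsPol.coord i a).add ((c (d + 1) (by omega)).const_mul (v i))
      convert h1 using 2
      simp; ring
    · intro e he
      have h2 := (a.const_mul (v i)).mono (by omega : d ≤ e)
      have h3 : IsPol e (fun x => x i * ((f (x + v) - f (x - v)) / 2)) := by
        rcases Nat.eq_zero_or_pos d with h0 | h0
        · simp only [b h0, mul_zero]; exact .const e 0
        · obtain ⟨d', rfl⟩ : ∃ d', d = d' + 1 := ⟨d - 1, by omega⟩
          exact ((c d' (by omega)).coord i).mono (by omega)
      convert h3.add h2 using 2
      simp; ring

lemma IsHom.isPol {d : ℕ} {f : EuclideanSpace ℝ (Fin n) → ℝ} (h : IsHom d f) : IsPol d f := by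
  induction h with
  | const c => exact .const 0 c
  | zero d => exact .const d 0
  | add _ _ h1 h2 => exact .add h1 h2
  | coord i _ h => exact .coord i h

lemma IsHom.smul {d : ℕ} {f : EuclideanSpace ℝ (Fin n) → ℝ} (h : IsHom d f) (c : ℝ)
    (x : EuclideanSpace ℝ (Fin n)) : f (c • x) = c ^ d * f x := by
  induction h with
  | const c => simp
  | zero d => simp
  | add _ _ h1 h2 => beta_reduce; rw [h1, h2]; ring
  | coord i _ h => beta_reduce; rw [h]; simp; ring

lemma IsHom.sum {ι : Type*} (s : Finset ι) {d : ℕ} {f : ι → EuclideanSpace ℝ (Fin n) → ℝ}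
    (h : ∀ i ∈ s, IsHom d (f i)) : IsHom d (fun x => ∑ i ∈ s, f i x) := by
  classical
  induction s using Finset.induction_on with
  | empty => simpa using IsHom.zero d
  | insert a s ha ih =>
    simp only [Finset.sum_insert ha]
    exact .add (h a (Finset.mem_insert_self a s)) (ih fun i hi => h i (Finset.mem_insert_of_mem hi))

lemma exists_hom_const (c : ℝ) (m : ℕ) : ∃ a : EuclideanSpace ℝ (Fin n) → ℝ,
    IsHom (2 * m) a ∧ ∀ x, ‖x‖ = 1 → a x = c := by
  induction m with
  | zero => exact ⟨_, .const c, fun _ _ => rfl⟩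
  | succ m ih =>
    obtain ⟨a, ha, h⟩ := ih
    refine ⟨fun x => ∑ i, x i * (x i * a x), IsHom.sum _ fun i _ => .coord i (.coord i ha), ?_⟩
    intro x hx
    have : ∑ i, x i * (x i * a x) = (∑ i, x i ^ 2) * a x := by
      rw [Finset.sum_mul]; exact Finset.sum_congr rfl fun i _ => by ring
    have h2 : ∑ i, x i ^ 2 = 1 := by
      have := EuclideanSpace.real_norm_sq_eq x
      rw [← this, hx]; norm_num
    beta_reduce
    rw [this, h2, h x hx, one_mul]

lemma IsPol.decomp {d : ℕ} {f : EuclideanSpace ℝ (Fin n) → ℝ} (h : IsPol d f) :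
    ∃ a b : EuclideanSpace ℝ (Fin n) → ℝ, ∃ e, IsHom d a ∧ IsHom e b ∧
      ((d = e + 1) ∨ (e = 1 ∧ d = 0 ∧ ∀ x, b x = 0)) ∧ ∀ x, ‖x‖ = 1 → f x = a x + b x := by
  induction h with
  | const d c =>
    rcases Nat.even_or_odd' d with ⟨m, rfl | rfl⟩
    · obtain ⟨a, ha, h⟩ := exists_hom_const (n := n) c m
      rcases Nat.eq_zero_or_pos m with rfl | hm
      · exact ⟨a, fun _ => 0, 1, ha, .zero _, Or.inr ⟨rfl, rfl, fun _ => rfl⟩,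
          fun x hx => by simp [h x hx]⟩
      · exact ⟨a, fun _ => 0, 2 * m - 1, ha, .zero _, Or.inl (by omega),
          fun x hx => by simp [h x hx]⟩
    · obtain ⟨a, ha, h⟩ := exists_hom_const (n := n) c m
      exact ⟨fun _ => 0, a, 2 * m, .zero _, ha, Or.inl rfl, fun x hx => by simp [h x hx]⟩
  | @add d f g _ _ h1 h2 =>
    obtain ⟨a, b, e, ha, hb, hde, h⟩ := h1
    obtain ⟨a', b', e', ha', hb', hde', h'⟩ := h2
    obtain rfl : e = e' := by omega
    refine ⟨_, _, e, ha.add ha', hb.add hb', ?_, fun x hx => by beta_reduce; rw [h x hx, h' x hx]; ring⟩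
    rcases hde with hde | ⟨h1, h2, h3⟩
    · exact Or.inl hde
    · rcases hde' with hde' | ⟨h1', h2', h3'⟩
      · exact Or.inl hde'
      · exact Or.inr ⟨h1, h2, fun x => by simp [h3, h3']⟩
  | @coord d f i _ h =>
    obtain ⟨a, b, e, ha, hb, hde, h⟩ := h
    rcases hde with hde | ⟨h1, h2, h3⟩
    · exact ⟨_, _, e + 1, ha.coord i, hb.coord i, Or.inl (by omega),
        fun x hx => by beta_reduce; rw [h x hx]; ring⟩
    · exact ⟨_, fun _ => 0, 0, ha.coord i, .zero 0, Or.inl (by omega),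
        fun x hx => by beta_reduce; rw [h x hx, h3]; ring⟩

end SphereHC

namespace SphereHC
open MeasureTheory
open scoped ENNReal
variable {n : ℕ}

/-- law of the Rademacher sum `∑ ε_j v_j` -/
def cub : List (EuclideanSpace ℝ (Fin n)) → Measure (EuclideanSpace ℝ (Fin n))
  | [] => Measure.dirac 0
  | v :: l => (2⁻¹ : ℝ≥0∞) • ((cub l).map (fun x => x + v) + (cub l).map (fun x => x - v))

instance cub_prob (l : List (EuclideanSpace ℝ (Fin n))) : IsProbabilityMeasure (cub l) := by
  induction l with
  | nil => unfold cub; infer_instance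
  | cons v l ih =>
    constructor
    rw [cub, Measure.smul_apply, Measure.add_apply, Measure.map_apply (by fun_prop) .univ,
      Measure.map_apply (by fun_prop) .univ]
    simp only [Set.preimage_univ, measure_univ, smul_eq_mul]
    rw [one_add_one_eq_two]
    exact ENNReal.inv_mul_cancel (by norm_num) (by norm_num)

lemma cub_integrable {F : Type*} [NormedAddCommGroup F] [SecondCountableTopology F]
    (l : List (EuclideanSpace ℝ (Fin n)))
    (f : EuclideanSpace ℝ (Fin n) → F) (hf : Continuous f) : Integrable f (cub l) := by
  induction l generalizing f with
  | nil =>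
    unfold cub
    exact integrable_dirac (by simp)
  | cons v l ih =>
    unfold cub
    refine Integrable.smul_measure ?_ (by norm_num)
    refine Integrable.add_measure ?_ ?_
    · rw [integrable_map_measure hf.aestronglyMeasurable (by fun_prop)]
      exact ih _ (by fun_prop)
    · rw [integrable_map_measure hf.aestronglyMeasurable (by fun_prop)]
      exact ih _ (by fun_prop)

lemma cub_integral {F : Type*} [NormedAddCommGroup F] [SecondCountableTopology F]
    [NormedSpace ℝ F] (v : EuclideanSpace ℝ (Fin n)) (l : List (EuclideanSpace ℝ (Fin n)))
    (f : EuclideanSpace ℝ (Fin n) → F) (hf : Continuous f) :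
    ∫ x, f x ∂(cub (v :: l)) = (2⁻¹ : ℝ) • (∫ x, f (x + v) ∂(cub l) + ∫ x, f (x - v) ∂(cub l)) := by
  rw [cub, integral_smul_measure, integral_add_measure, integral_map (by fun_prop) hf.aestronglyMeasurable,
    integral_map (by fun_prop) hf.aestronglyMeasurable]
  · simp
  · rw [integrable_map_measure hf.aestronglyMeasurable (by fun_prop)]
    exact cub_integrable _ _ (by fun_prop)
  · rw [integrable_map_measure hf.aestronglyMeasurable (by fun_prop)]
    exact cub_integrable _ _ (by fun_prop)

lemma charFun_cub (l : List (EuclideanSpace ℝ (Fin n))) (t : EuclideanSpace ℝ (Fin n)) :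
    charFun (cub l) t = (l.map (fun v => Complex.cos (inner ℝ v t : ℝ))).prod := by
  induction l with
  | nil => simp [cub, charFun_apply]
  | cons v l ih =>
    rw [List.map_cons, List.prod_cons, ← ih, charFun_apply, charFun_apply, cub_integral _ _ _ (by fun_prop)]
    simp only [inner_add_left, inner_sub_left, Complex.ofReal_add, Complex.ofReal_sub, add_mul,
      sub_mul, Complex.exp_add, Complex.exp_sub, div_eq_mul_inv, integral_mul_const]
    rw [Complex.cos, ← Complex.exp_neg]
    simp
    ring

lemma cub_sq (l : List (EuclideanSpace ℝ (Fin n))) (i : Fin n) :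
    ∫ x, x i ^ 2 ∂(cub l) = (l.map (fun v => v i ^ 2)).sum := by
  induction l with
  | nil => simp [cub]
  | cons v l ih =>
    rw [List.map_cons, List.sum_cons, ← ih, cub_integral v l (fun x => x i ^ 2) (by fun_prop)]
    rw [← integral_add (cub_integrable _ _ (by fun_prop)) (cub_integrable _ _ (by fun_prop))]
    have : ∀ x : EuclideanSpace ℝ (Fin n), (x + v) i ^ 2 + (x - v) i ^ 2 = 2 * (v i ^ 2 + x i ^ 2) := by
      intro x; simp; ring
    simp only [this]
    rw [integral_const_mul, integral_add (by simp) (cub_integrable _ _ (by fun_prop))]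
    simp

/-- Bonami's inequality for Rademacher sums -/
lemma cub_hc (q : ℝ) (hq : 2 ≤ q) (l : List (EuclideanSpace ℝ (Fin n))) (d : ℕ)
    (g : EuclideanSpace ℝ (Fin n) → ℝ) (hg : IsPol d g) :
    (∫ x, |g x| ^ q ∂(cub l)) ^ (2 / q) ≤ (q - 1) ^ d * ∫ x, g x ^ 2 ∂(cub l) := by
  have hq0 : 0 < q := by linarith
  have hcont : ∀ f : EuclideanSpace ℝ (Fin n) → ℝ, Continuous f → Continuous fun x => |f x| ^ q :=
    fun f hf => hf.abs.rpow_const fun _ => Or.inr hq0.le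
  induction l generalizing d g with
  | nil =>
    simp only [cub, integral_dirac]
    rw [← Real.rpow_mul (abs_nonneg _), mul_div_cancel₀ _ hq0.ne', Real.rpow_two, sq_abs]
    exact le_mul_of_one_le_left (sq_nonneg _) (one_le_pow₀ (by linarith))
  | cons v l ih =>
    obtain ⟨ha, hb0, hb⟩ := hg.split v
    set a : EuclideanSpace ℝ (Fin n) → ℝ := fun x => (g (x + v) + g (x - v)) / 2 with ha_def
    set b : EuclideanSpace ℝ (Fin n) → ℝ := fun x => (g (x + v) - g (x - v)) / 2 with hb_def
    have hbc : Continuous b := (hb d (by omega)).continuous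
    have hgc := hg.continuous
    have e1 : ∀ x, g (x + v) = a x + b x := fun x => by simp only [ha_def, hb_def]; ring
    have e2 : ∀ x, g (x - v) = a x - b x := fun x => by simp only [ha_def, hb_def]; ring
    have hs : ∫ x, g x ^ 2 ∂(cub (v :: l)) = ∫ x, a x ^ 2 ∂(cub l) + ∫ x, b x ^ 2 ∂(cub l) := by
      rw [cub_integral v l _ (by fun_prop)]
      simp only [e1, e2]
      have hac := ha.continuous
      rw [← integral_add (cub_integrable _ _ (by fun_prop)) (cub_integrable _ _ (by fun_prop)),
        ← integral_add (cub_integrable _ _ (by fun_prop)) (cub_integrable _ _ (by fun_prop)),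
        smul_eq_mul, ← integral_const_mul]
      congr 1; funext x; ring
    rw [hs]
    have hac := ha.continuous
    refine comb (cub l) q hq d a b hac.aestronglyMeasurable hbc.aestronglyMeasurable
      (cub_integrable _ _ (hcont a hac)) (cub_integrable _ _ (hcont b hbc)) _
      (integral_nonneg fun x => Real.rpow_nonneg (abs_nonneg _) _) ?_ (ih d a ha) ?_
    · rw [cub_integral v l _ (hcont g hgc)]
      simp only [e1, e2]
      rw [← integral_add (cub_integrable _ _ (hcont _ (by fun_prop)))
        (cub_integrable _ _ (hcont _ (by fun_prop))), smul_eq_mul, ← integral_const_mul]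
      have h1 := hcont (fun x => a x + b x) (by fun_prop)
      have h2 := hcont (fun x => a x - b x) (by fun_prop)
      refine integral_mono (cub_integrable _ _ (by fun_prop)) (cub_integrable _ _ ?_) ?_
      · exact Continuous.rpow_const (by fun_prop) fun _ => Or.inr (by linarith)
      · intro x
        have := two_point q hq (a x) (b x)
        beta_reduce
        linarith
    · rcases Nat.eq_zero_or_pos d with h0 | h0
      · have : b = fun _ => 0 := funext fun x => hb0 h0 x
        rw [this]
        simp [Real.zero_rpow hq0.ne', Real.zero_rpow (by positivity : 2 / q ≠ 0)]
      · obtain ⟨e, rfl⟩ : ∃ e, d = e + 1 := ⟨d - 1, by omega⟩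
        have := mul_le_mul_of_nonneg_left (ih e b (hb e le_rfl)) (by linarith : 0 ≤ q - 1)
        rw [pow_succ]
        linarith

end SphereHC

namespace SphereHC
open MeasureTheory ProbabilityTheory Filter
open scoped ENNReal Topology
variable {n : ℕ}

/-- normalised Rademacher sums -/
def rho (n m : ℕ) : Measure (EuclideanSpace ℝ (Fin n)) :=
  cub (List.replicate m (List.ofFn fun i : Fin n =>
    (√(m : ℝ))⁻¹ • EuclideanSpace.single i (1 : ℝ))).flatten

instance (n m : ℕ) : IsProbabilityMeasure (rho n m) := cub_prob _

lemma charFun_rho (m : ℕ) (t : EuclideanSpace ℝ (Fin n)) :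
    charFun (rho n m) t = ∏ i, (Complex.cos (((√(m : ℝ))⁻¹ * t i : ℝ))) ^ m := by
  rw [rho, charFun_cub, List.map_flatten, List.prod_flatten, List.map_replicate, List.map_replicate,
    List.prod_replicate, Finset.prod_pow]
  congr 1
  rw [List.map_ofFn, List.prod_ofFn]
  refine Finset.prod_congr rfl fun i _ => ?_
  simp [inner_smul_left, EuclideanSpace.inner_single_left]

lemma rho_sq (m : ℕ) (i : Fin n) : ∫ x, x i ^ 2 ∂(rho n m) ≤ 1 := by
  rw [rho, cub_sq, List.map_flatten, List.sum_flatten, List.map_replicate, List.map_replicate,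
    List.sum_replicate, List.map_ofFn, List.sum_ofFn]
  have : ∀ j : Fin n, (((fun v : EuclideanSpace ℝ (Fin n) => v i ^ 2) ∘ fun i : Fin n =>
    (√(m : ℝ))⁻¹ • EuclideanSpace.single i (1 : ℝ)) j) = if i = j then ((m : ℝ))⁻¹ else 0 := by
    intro j
    by_cases h : i = j
    · subst h; simp
    · simp [h]
  rw [Finset.sum_congr rfl fun j _ => this j]
  simp
  exact mul_inv_le_one

lemma tendsto_cos_pow (t : ℝ) :
    Tendsto (fun m : ℕ => (Complex.cos (((√(m : ℝ))⁻¹ * t : ℝ))) ^ m) atTop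
      (𝓝 (Complex.exp (-t ^ 2 / 2))) := by
  let P : Measure ℝ := (2⁻¹ : ℝ≥0∞) • (Measure.dirac 1 + Measure.dirac (-1))
  have : IsProbabilityMeasure P := by
    constructor
    simp only [P, Measure.smul_apply, Measure.add_apply, measure_univ, smul_eq_mul]
    rw [one_add_one_eq_two]
    exact ENNReal.inv_mul_cancel (by norm_num) (by norm_num)
  have hIntEq : ∀ {F : Type} [NormedAddCommGroup F] [NormedSpace ℝ F] [CompleteSpace F] (f : ℝ → F),
      ∫ x, f x ∂P = (2⁻¹ : ℝ) • (f 1 + f (-1)) := by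
    intro F _ _ _ f
    rw [integral_smul_measure, integral_add_measure (integrable_dirac (by simp))
        (integrable_dirac (by simp)), integral_dirac, integral_dirac]
    simp
  have h := tendsto_charFun_inv_sqrt_mul_pow (P := P) (X := id) aemeasurable_id
    (by rw [hIntEq]; simp) (by rw [hIntEq]; norm_num) t
  refine h.congr fun m => ?_
  rw [Measure.map_id, charFun_apply, hIntEq, Complex.cos]
  simp
  congr 1
  ring

/-- bundled version of `rho` -/
def rhoP (n m : ℕ) : ProbabilityMeasure (EuclideanSpace ℝ (Fin n)) :=
  ⟨rho n m, inferInstance⟩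

/-- bundled standard gaussian -/
def gamP (n : ℕ) : ProbabilityMeasure (EuclideanSpace ℝ (Fin n)) :=
  ⟨stdGaussian (EuclideanSpace ℝ (Fin n)), inferInstance⟩

lemma rho_tendsto : Tendsto (fun m => rhoP n m) atTop (𝓝 (gamP n)) := by
  refine ProbabilityMeasure.tendsto_iff_tendsto_charFun.2 fun t => ?_
  simp only [rhoP, gamP, ProbabilityMeasure.coe_mk, charFun_stdGaussian, charFun_rho]
  have h := tendsto_finsetProd (Finset.univ : Finset (Fin n)) (fun i _ => tendsto_cos_pow (t i))
  convert h using 2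
  rw [← Complex.exp_sum]
  congr 1
  rw [← Finset.sum_div, Finset.sum_neg_distrib]
  congr 2
  have := EuclideanSpace.real_norm_sq_eq t
  exact_mod_cast this

lemma rho_tendsto_integral (f : EuclideanSpace ℝ (Fin n) → ℝ) (hf : Continuous f) (K : ℝ)
    (h0 : ∀ x, 0 ≤ f x) (hK : ∀ x, f x ≤ K) :
    Tendsto (fun m => ∫ x, f x ∂(rho n m)) atTop
      (𝓝 (∫ x, f x ∂(stdGaussian (EuclideanSpace ℝ (Fin n))))) := by
  have h := (ProbabilityMeasure.tendsto_iff_forall_integral_tendsto.1 (rho_tendsto (n := n)))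
    (BoundedContinuousFunction.ofNormedAddCommGroup f hf K (fun x => by
      rw [Real.norm_eq_abs, abs_of_nonneg (h0 x)]; exact hK x))
  exact h

lemma rho_integrable (m : ℕ) (f : EuclideanSpace ℝ (Fin n) → ℝ) (hf : Continuous f) :
    Integrable f (rho n m) := cub_integrable _ _ hf

lemma rho_hc (q : ℝ) (hq : 2 ≤ q) (m : ℕ) (d : ℕ)
    (g : EuclideanSpace ℝ (Fin n) → ℝ) (hg : IsPol d g) :
    (∫ x, |g x| ^ q ∂(rho n m)) ^ (2 / q) ≤ (q - 1) ^ d * ∫ x, g x ^ 2 ∂(rho n m) :=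
  cub_hc q hq _ d g hg

lemma rho_four {d : ℕ} {g : EuclideanSpace ℝ (Fin n) → ℝ} (hg : IsPol d g) (m : ℕ) :
    ∫ x, g x ^ 4 ∂(rho n m) ≤ ((3:ℝ) ^ d * ∫ x, g x ^ 2 ∂(rho n m)) ^ 2 := by
  have h := rho_hc 4 (by norm_num) m d g hg
  have e : ∀ x, |g x| ^ (4:ℝ) = g x ^ 4 := by
    intro x
    rw [show (4:ℝ) = ((4:ℕ):ℝ) by norm_num, Real.rpow_natCast, Even.pow_abs (by decide)]
  simp only [e] at h
  rw [show ((4:ℝ) - 1) = 3 by norm_num, show (2:ℝ)/4 = 1/2 by norm_num, ← Real.sqrt_eq_rpow] at h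
  exact (Real.sqrt_le_iff.1 h).2

lemma rho_bdd {d : ℕ} {g : EuclideanSpace ℝ (Fin n) → ℝ} (hg : IsPol d g) :
    ∃ C : ℝ, ∀ m, ∫ x, g x ^ 2 ∂(rho n m) ≤ C := by
  induction hg with
  | const d c => exact ⟨c ^ 2, fun m => by simp⟩
  | @add d f g hf hg h1 h2 =>
    obtain ⟨C1, h1⟩ := h1
    obtain ⟨C2, h2⟩ := h2
    refine ⟨2 * (C1 + C2), fun m => ?_⟩
    have hfc := hf.continuous
    have hgc := hg.continuous
    calc ∫ x, (f x + g x) ^ 2 ∂(rho n m) ≤ ∫ x, 2 * (f x ^ 2 + g x ^ 2) ∂(rho n m) := by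
          refine integral_mono (rho_integrable _ _ (by fun_prop)) (rho_integrable _ _ (by fun_prop)) ?_
          intro x
          have := sq_nonneg (f x - g x)
          beta_reduce
          nlinarith
      _ = 2 * (∫ x, f x ^ 2 ∂(rho n m) + ∫ x, g x ^ 2 ∂(rho n m)) := by
          rw [integral_const_mul, integral_add (rho_integrable _ _ (by fun_prop))
            (rho_integrable _ _ (by fun_prop))]
      _ ≤ _ := by linarith [h1 m, h2 m]
  | @coord d f i hf h =>
    obtain ⟨C, h⟩ := h
    have hfc := hf.continuous
    refine ⟨((3 ^ 1 * 1) ^ 2 + (3 ^ d * C) ^ 2) / 2, fun m => ?_⟩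
    have hx : IsPol 1 (fun x : EuclideanSpace ℝ (Fin n) => x i) := by
      simpa using IsPol.coord i (IsPol.const 0 1)
    have a1 := rho_four hx m
    have a2 := rho_four hf m
    have a3 : ((3:ℝ) ^ 1 * ∫ x, x i ^ 2 ∂(rho n m)) ^ 2 ≤ (3 ^ 1 * 1) ^ 2 := by
      have := rho_sq m i
      have : 0 ≤ ∫ x, x i ^ 2 ∂(rho n m) := integral_nonneg fun x => sq_nonneg _
      gcongr
    have a4 : ((3:ℝ) ^ d * ∫ x, f x ^ 2 ∂(rho n m)) ^ 2 ≤ (3 ^ d * C) ^ 2 := by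
      have := h m
      have : 0 ≤ ∫ x, f x ^ 2 ∂(rho n m) := integral_nonneg fun x => sq_nonneg _
      gcongr
    calc ∫ x, (x i * f x) ^ 2 ∂(rho n m) ≤ ∫ x, (x i ^ 4 + f x ^ 4) / 2 ∂(rho n m) := by
          refine integral_mono (rho_integrable _ _ (by fun_prop)) (rho_integrable _ _ (by fun_prop)) ?_
          intro x
          have := sq_nonneg (x i ^ 2 - f x ^ 2)
          beta_reduce
          nlinarith
      _ = (∫ x, x i ^ 4 ∂(rho n m) + ∫ x, f x ^ 4 ∂(rho n m)) / 2 := by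
          rw [integral_div, integral_add (rho_integrable _ _ (by fun_prop))
            (rho_integrable _ _ (by fun_prop))]
      _ ≤ _ := by linarith

end SphereHC

namespace SphereHC
open MeasureTheory ProbabilityTheory Filter
open scoped ENNReal Topology
variable {n : ℕ}

/-- standard gaussian -/
abbrev gam (n : ℕ) : Measure (EuclideanSpace ℝ (Fin n)) := stdGaussian (EuclideanSpace ℝ (Fin n))

lemma gam_memLp {d : ℕ} {g : EuclideanSpace ℝ (Fin n) → ℝ} (hg : IsPol d g) :
    ∀ p : ℝ≥0∞, p ≠ ∞ → MemLp g p (gam n) := by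
  induction hg with
  | const d c => intro p _; exact memLp_const c
  | add _ _ h1 h2 => intro p hp; exact (h1 p hp).add (h2 p hp)
  | @coord d f i hf h =>
    intro p hp
    have hp2 : 2 * p ≠ ∞ := ENNReal.mul_ne_top (by norm_num) hp
    have hid : MemLp (id : EuclideanSpace ℝ (Fin n) → _) (2 * p) (gam n) :=
      IsGaussian.memLp_id (gam n) (2 * p) hp2
    have hx : MemLp (fun x : EuclideanSpace ℝ (Fin n) => x i) (2 * p) (gam n) := by
      refine hid.of_le (by fun_prop) (Eventually.of_forall fun x => ?_)
      exact PiLp.norm_apply_le x i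
    have : ENNReal.HolderTriple (2 * p) (2 * p) p := by
      constructor
      rw [ENNReal.mul_inv (by simp) (by simp), ← add_mul, ENNReal.inv_two_add_inv_two, one_mul]
    exact (h _ hp2).mul' hx

lemma gam_integrable_rpow {d : ℕ} {g : EuclideanSpace ℝ (Fin n) → ℝ} (hg : IsPol d g)
    (q : ℝ) (hq : 0 < q) : Integrable (fun x => |g x| ^ q) (gam n) := by
  have h := gam_memLp hg (ENNReal.ofReal q) ENNReal.ofReal_ne_top
  have := h.integrable_norm_rpow (by simpa using hq) ENNReal.ofReal_ne_top
  rw [ENNReal.toReal_ofReal hq.le] at this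
  exact this

lemma min_integrable {ν : Measure (EuclideanSpace ℝ (Fin n))} [IsProbabilityMeasure ν]
    {f : EuclideanSpace ℝ (Fin n) → ℝ} (hf : Continuous f) (h0 : ∀ x, 0 ≤ f x) (K : ℝ) (hK : 0 ≤ K) :
    Integrable (fun x => min (f x) K) ν := by
  refine Integrable.of_bound (C := K) (by fun_prop : Continuous _).aestronglyMeasurable
    (Eventually.of_forall fun x => ?_)
  rw [Real.norm_eq_abs, abs_of_nonneg (le_min (h0 x) hK)]
  exact min_le_right _ _

lemma gauss_hc (q : ℝ) (hq : 2 ≤ q) (d : ℕ)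
    (g : EuclideanSpace ℝ (Fin n) → ℝ) (hg : IsPol d g) :
    (∫ x, |g x| ^ q ∂(gam n)) ^ (2 / q) ≤ (q - 1) ^ d * ∫ x, g x ^ 2 ∂(gam n) := by
  have hq0 : 0 < q := by linarith
  have hgc := hg.continuous
  have hgq : Continuous fun x => |g x| ^ q := hgc.abs.rpow_const fun _ => Or.inr hq0.le
  have hq1 : 0 ≤ (q - 1) ^ d := pow_nonneg (by linarith) d
  obtain ⟨C, hC⟩ := rho_bdd hg
  have hI2 : Integrable (fun x => g x ^ 2) (gam n) := by
    have := gam_integrable_rpow hg 2 (by norm_num)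
    simpa using this
  -- second moments
  have s1 : ∀ (K : ℝ), 0 < K → ∀ m, ∫ x, g x ^ 2 ∂(rho n m) ≤
      ∫ x, min (g x ^ 2) K ∂(rho n m) + ((3:ℝ) ^ d * C) ^ 2 / K := by
    intro K hK m
    have h4 : ∫ x, g x ^ 4 ∂(rho n m) ≤ ((3:ℝ) ^ d * C) ^ 2 := by
      refine (rho_four hg m).trans ?_
      have := hC m
      have : 0 ≤ ∫ x, g x ^ 2 ∂(rho n m) := integral_nonneg fun x => sq_nonneg _
      gcongr
    calc ∫ x, g x ^ 2 ∂(rho n m) ≤ ∫ x, (min (g x ^ 2) K + g x ^ 4 / K) ∂(rho n m) := by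
          refine integral_mono (rho_integrable _ _ (by fun_prop)) (rho_integrable _ _ (by fun_prop)) ?_
          intro x
          beta_reduce
          rcases le_total (g x ^ 2) K with h | h
          · rw [min_eq_left h]
            have : 0 ≤ g x ^ 4 / K := by positivity
            linarith
          · rw [min_eq_right h]
            have : g x ^ 2 ≤ g x ^ 4 / K := by
              rw [le_div_iff₀ hK]
              nlinarith [sq_nonneg (g x)]
            linarith
      _ = ∫ x, min (g x ^ 2) K ∂(rho n m) + (∫ x, g x ^ 4 ∂(rho n m)) / K := by
          rw [integral_add (rho_integrable _ _ (by fun_prop)) (rho_integrable _ _ (by fun_prop)),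
            integral_div]
      _ ≤ _ := by gcongr
  -- truncated q-moments
  have s2 : ∀ (L : ℝ), 0 ≤ L → ∀ (K : ℝ), 0 < K →
      (∫ x, min (|g x| ^ q) L ∂(gam n)) ^ (2 / q) ≤
        (q - 1) ^ d * (∫ x, g x ^ 2 ∂(gam n) + ((3:ℝ) ^ d * C) ^ 2 / K) := by
    intro L hL K hK
    have t1 := (rho_tendsto_integral (fun x => min (|g x| ^ q) L) (by fun_prop) L
      (fun x => le_min (by positivity) hL) (fun x => min_le_right _ _)).rpow_const
        (p := 2 / q) (Or.inr (by positivity))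
    have t2 := ((rho_tendsto_integral (fun x => min (g x ^ 2) K) (by fun_prop) K
      (fun x => le_min (by positivity) hK.le) (fun x => min_le_right _ _)).add_const
        (((3:ℝ) ^ d * C) ^ 2 / K)).const_mul ((q - 1) ^ d)
    have t3 := le_of_tendsto_of_tendsto' t1 t2 (fun m => by
      have a1 : (∫ x, min (|g x| ^ q) L ∂(rho n m)) ^ (2 / q) ≤ (∫ x, |g x| ^ q ∂(rho n m)) ^ (2 / q) := by
        refine Real.rpow_le_rpow (integral_nonneg fun x => le_min (by positivity) hL) ?_ (by positivity)
        exact integral_mono (rho_integrable _ _ (by fun_prop)) (rho_integrable _ _ (by fun_prop))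
          (fun x => min_le_left _ _)
      exact a1.trans ((rho_hc q hq m d g hg).trans (mul_le_mul_of_nonneg_left (s1 K hK m) hq1)))
    refine t3.trans (mul_le_mul_of_nonneg_left ?_ hq1)
    refine add_le_add (integral_mono (min_integrable (by fun_prop) (fun x => sq_nonneg _) K hK.le)
      hI2 fun x => min_le_left _ _) le_rfl
  have s3 : ∀ (L : ℝ), 0 ≤ L → (∫ x, min (|g x| ^ q) L ∂(gam n)) ^ (2 / q) ≤
        (q - 1) ^ d * (∫ x, g x ^ 2 ∂(gam n)) := by
    intro L hL
    have t : Tendsto (fun K : ℝ => (q - 1) ^ d * (∫ x, g x ^ 2 ∂(gam n) + ((3:ℝ) ^ d * C) ^ 2 / K))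
        atTop (𝓝 ((q - 1) ^ d * (∫ x, g x ^ 2 ∂(gam n) + 0))) :=
      ((tendsto_const_nhds.div_atTop tendsto_id).const_add _).const_mul _
    rw [add_zero] at t
    exact ge_of_tendsto t ((eventually_gt_atTop 0).mono fun K hK => s2 L hL K hK)
  have t : Tendsto (fun L : ℕ => ∫ x, min (|g x| ^ q) (L : ℝ) ∂(gam n)) atTop
      (𝓝 (∫ x, |g x| ^ q ∂(gam n))) := by
    refine tendsto_integral_of_dominated_convergence (fun x => |g x| ^ q) ?_
      (gam_integrable_rpow hg q hq0) ?_ ?_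
    · intro L
      exact (by fun_prop : Continuous fun x => min (|g x| ^ q) (L : ℝ)).aestronglyMeasurable
    · intro L
      refine Eventually.of_forall fun x => ?_
      rw [Real.norm_eq_abs, abs_of_nonneg (le_min (by positivity) (by positivity))]
      exact min_le_left _ _
    · refine Eventually.of_forall fun x => ?_
      refine tendsto_const_nhds.congr' ?_
      filter_upwards [eventually_ge_atTop ⌈|g x| ^ q⌉₊] with L hL
      rw [min_eq_left (Nat.ceil_le.1 hL)]
  exact le_of_tendsto' (t.rpow_const (p := 2 / q) (Or.inr (by positivity)))
    fun L => s3 L (by positivity)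

end SphereHC

namespace SphereHC
open MeasureTheory ProbabilityTheory Filter
open scoped ENNReal Topology
variable {n : ℕ}

/-- the sphere -/
abbrev Sph (n : ℕ) := Metric.sphere (0 : EuclideanSpace ℝ (Fin (n + 1))) 1

/-- invariance under isometries -/
def Inv (μ : Measure (Sph n)) : Prop :=
  ∀ (U : EuclideanSpace ℝ (Fin (n + 1)) ≃ₗᵢ[ℝ] EuclideanSpace ℝ (Fin (n + 1))),
    ∃ φ : Sph n → Sph n, Continuous φ ∧ (∀ ξ, (φ ξ).1 = U ξ.1) ∧ Measure.map φ μ = μ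

lemma Inv.integral {F : Type*} [NormedAddCommGroup F] [SecondCountableTopology F]
    [NormedSpace ℝ F] {μ : Measure (Sph n)} (hμ : Inv μ)
    (U : EuclideanSpace ℝ (Fin (n + 1)) ≃ₗᵢ[ℝ] EuclideanSpace ℝ (Fin (n + 1)))
    (f : EuclideanSpace ℝ (Fin (n + 1)) → F) (hf : Continuous f) :
    ∫ ξ, f (U ξ.1) ∂μ = ∫ ξ, f ξ.1 ∂μ := by
  obtain ⟨φ, hφ, h1, h2⟩ := hμ U
  conv_rhs => rw [← h2]
  have hfm : Continuous fun ξ : Sph n => f ξ.1 := hf.comp continuous_subtype_val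
  rw [integral_map hφ.measurable.aemeasurable hfm.aestronglyMeasurable]
  simp only [h1]

lemma Inv.const {μ : Measure (Sph n)} (hμ : Inv μ) (t t' : EuclideanSpace ℝ (Fin (n + 1)))
    (h : ‖t‖ = ‖t'‖) :
    ∫ ξ, Complex.exp ((inner ℝ ξ.1 t : ℝ) * Complex.I) ∂μ
      = ∫ ξ, Complex.exp ((inner ℝ ξ.1 t' : ℝ) * Complex.I) ∂μ := by
  set U := (Submodule.span ℝ {t - t'})ᗮ.reflection with hU
  have hUt : U t = t' := Submodule.reflection_sub h
  have := hμ.integral U (fun x => Complex.exp ((inner ℝ x t' : ℝ) * Complex.I)) (by fun_prop)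
  rw [← this]
  simp only [← hUt, LinearIsometryEquiv.inner_map_map]

lemma polar {μ : Measure (Sph n)} [IsProbabilityMeasure μ] (hμ : Inv μ) :
    ((gam (n + 1)).prod μ).map (fun p => ‖p.1‖ • (p.2 : EuclideanSpace ℝ (Fin (n + 1))))
      = gam (n + 1) := by
  have hc : Continuous (fun p : EuclideanSpace ℝ (Fin (n + 1)) × Sph n =>
    ‖p.1‖ • (p.2 : EuclideanSpace ℝ (Fin (n + 1)))) := by fun_prop
  have : IsProbabilityMeasure (((gam (n + 1)).prod μ).map
      (fun p => ‖p.1‖ • (p.2 : EuclideanSpace ℝ (Fin (n + 1))))) :=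
    Measure.isProbabilityMeasure_map hc.measurable.aemeasurable
  refine Measure.ext_of_charFun ?_
  funext t
  have hb : ∀ f : EuclideanSpace ℝ (Fin (n + 1)) × Sph n → ℝ, Continuous f →
      Integrable (fun p => Complex.exp (f p * Complex.I)) ((gam (n + 1)).prod μ) := by
    intro f hf
    refine Integrable.of_bound (C := 1) (by fun_prop : Continuous _).aestronglyMeasurable
      (Eventually.of_forall fun x => ?_)
    rw [Complex.norm_exp_ofReal_mul_I]
  rw [charFun_apply, integral_map hc.measurable.aemeasurable
    (by fun_prop : Continuous _).aestronglyMeasurable]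
  rw [integral_prod _ (hb (fun p => inner ℝ (‖p.1‖ • (p.2 : EuclideanSpace ℝ (Fin (n + 1)))) t)
    (by fun_prop))]
  have e1 : ∀ x : EuclideanSpace ℝ (Fin (n + 1)),
      ∫ ξ : Sph n, Complex.exp ((inner ℝ (‖x‖ • ξ.1) t : ℝ) * Complex.I) ∂μ
      = ∫ ξ : Sph n, Complex.exp ((inner ℝ x (‖t‖ • ξ.1) : ℝ) * Complex.I) ∂μ := by
    intro x
    have := hμ.const (‖x‖ • t) (‖t‖ • x) (by simp [norm_smul, mul_comm])
    simp only [real_inner_smul_right, real_inner_smul_left] at this ⊢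
    rw [this]
    simp only [real_inner_comm]
  simp only [e1]
  rw [integral_integral_swap (hb (fun p => inner ℝ p.1 (‖t‖ • (p.2 : EuclideanSpace ℝ (Fin (n + 1)))))
    (by fun_prop))]
  have e2 : ∀ ξ : Sph n, ∫ x, Complex.exp ((inner ℝ x (‖t‖ • ξ.1) : ℝ) * Complex.I) ∂(gam (n + 1))
      = Complex.exp (- ‖t‖ ^ 2 / 2) := by
    intro ξ
    rw [← charFun_apply, charFun_stdGaussian, norm_smul]
    simp
  simp only [e2, charFun_stdGaussian]
  simp

lemma gam_norm_integrable (r : ℝ) (hr : 0 ≤ r) :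
    Integrable (fun x : EuclideanSpace ℝ (Fin n) => ‖x‖ ^ r) (gam n) := by
  have := (IsGaussian.memLp_id (gam n) (ENNReal.ofReal r) ENNReal.ofReal_ne_top).integrable_norm_rpow'
  rw [ENNReal.toReal_ofReal hr] at this
  exact this

lemma gam_norm_pos (d : ℕ) :
    0 < ∫ x : EuclideanSpace ℝ (Fin (n + 1)), (‖x‖ ^ d) ^ 2 ∂(gam (n + 1)) := by
  have hi : Integrable (fun x : EuclideanSpace ℝ (Fin (n + 1)) => (‖x‖ ^ d) ^ 2) (gam (n + 1)) := by
    have := gam_norm_integrable (n := n + 1) ((d * 2 : ℕ) : ℝ) (by positivity)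
    simpa only [Real.rpow_natCast, pow_mul] using this
  refine lt_of_le_of_ne (integral_nonneg fun x => by positivity) fun h => ?_
  have h0 := (integral_eq_zero_iff_of_nonneg (fun x => by positivity) hi).1 h.symm
  have h1 : ∀ᵐ x ∂(gam (n + 1)), x = 0 := by
    filter_upwards [h0] with x hx
    simp only [Pi.zero_apply] at hx
    exact norm_eq_zero.1 (eq_zero_of_pow_eq_zero (eq_zero_of_pow_eq_zero hx))
  let t : EuclideanSpace ℝ (Fin (n + 1)) := EuclideanSpace.single 0 1
  have h2 : charFun (gam (n + 1)) t = 1 := by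
    rw [charFun_apply]
    rw [integral_congr_ae (g := fun _ => (1 : ℂ))]
    · simp
    · filter_upwards [h1] with x hx
      simp [hx]
  rw [charFun_stdGaussian] at h2
  have ht : ‖t‖ = 1 := by simp [t]
  rw [ht] at h2
  have h3 : ((Real.exp (-1 ^ 2 / 2) : ℝ) : ℂ) = 1 := by
    rw [← h2]; push_cast; rfl
  have h4 : Real.exp (-1 ^ 2 / 2) = 1 := by exact_mod_cast h3
  rw [Real.exp_eq_one_iff] at h4
  norm_num at h4

lemma polar_integral {μ : Measure (Sph n)} [IsProbabilityMeasure μ] (hμ : Inv μ) {d : ℕ}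
    {g : EuclideanSpace ℝ (Fin (n + 1)) → ℝ} (hg : IsHom d g) (q : ℝ) (hq : 0 < q) :
    ∫ x, |g x| ^ q ∂(gam (n + 1)) =
      (∫ x, (‖x‖ ^ d) ^ q ∂(gam (n + 1))) * ∫ ξ, |g ξ.1| ^ q ∂μ := by
  have hgc := hg.isPol.continuous
  have hgq : Continuous fun x => |g x| ^ q := hgc.abs.rpow_const fun _ => Or.inr hq.le
  conv_lhs => rw [← polar hμ]
  rw [integral_map (by fun_prop : Continuous _).measurable.aemeasurable hgq.aestronglyMeasurable]
  rw [← integral_prod_mul (fun x : EuclideanSpace ℝ (Fin (n + 1)) => (‖x‖ ^ d) ^ q)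
    (fun ξ : Sph n => |g ξ.1| ^ q)]
  refine integral_congr_ae (Eventually.of_forall fun p => ?_)
  beta_reduce
  rw [hg.smul, abs_mul, Real.mul_rpow (abs_nonneg _) (abs_nonneg _), abs_of_nonneg (by positivity : 0 ≤ ‖p.1‖ ^ d)]

lemma sphere_hom {μ : Measure (Sph n)} [IsProbabilityMeasure μ] (hμ : Inv μ)
    (q : ℝ) (hq : 2 ≤ q) {d : ℕ}
    {g : EuclideanSpace ℝ (Fin (n + 1)) → ℝ} (hg : IsHom d g) :
    (∫ ξ, |g ξ.1| ^ q ∂μ) ^ (2 / q) ≤ (q - 1) ^ d * ∫ ξ, g ξ.1 ^ 2 ∂μ := by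
  have hq0 : 0 < q := by linarith
  have h := gauss_hc q hq d g hg.isPol
  have e2 := polar_integral hμ hg 2 (by norm_num)
  simp only [Real.rpow_two, sq_abs] at e2
  rw [polar_integral hμ hg q hq0, e2] at h
  set M2 := ∫ x : EuclideanSpace ℝ (Fin (n + 1)), (‖x‖ ^ d) ^ 2 ∂(gam (n + 1)) with hM2
  set Mq := ∫ x : EuclideanSpace ℝ (Fin (n + 1)), (‖x‖ ^ d) ^ q ∂(gam (n + 1)) with hMq
  have hpos : 0 < M2 := gam_norm_pos d
  have hMq0 : 0 ≤ Mq := integral_nonneg fun x => by positivity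
  have hJ : M2 ^ (q / 2) ≤ Mq := by
    have hcv := convexOn_rpow (p := q / 2) (by linarith)
    have := hcv.map_integral_le (μ := gam (n + 1)) (f := fun x => (‖x‖ ^ d) ^ 2)
      (Real.continuous_rpow_const (by positivity)).continuousOn isClosed_Ici
      (Eventually.of_forall fun x => by simp only [Set.mem_Ici]; positivity) ?_ ?_
    · refine this.trans (le_of_eq ?_)
      refine integral_congr_ae (Eventually.of_forall fun x => ?_)
      beta_reduce
      rw [sq_rpow_half, abs_of_nonneg (by positivity)]
    · have := gam_norm_integrable (n := n + 1) ((d * 2 : ℕ) : ℝ) (by positivity)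
      simpa only [Real.rpow_natCast, pow_mul] using this
    · have := gam_norm_integrable (n := n + 1) (d * q) (by positivity)
      refine this.congr (Eventually.of_forall fun x => ?_)
      simp only [Function.comp_def]
      rw [sq_rpow_half, abs_of_nonneg (by positivity), Real.rpow_natCast_mul (norm_nonneg _)]
  have hJ2 : M2 ≤ Mq ^ (2 / q) := by
    have := Real.rpow_le_rpow (by positivity) hJ (by positivity : 0 ≤ 2 / q)
    rwa [← Real.rpow_mul hpos.le, show q / 2 * (2 / q) = 1 by field_simp, Real.rpow_one] at this
  have hI2 : 0 ≤ ∫ ξ, g ξ.1 ^ 2 ∂μ := integral_nonneg fun x => sq_nonneg _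
  have hq1 : 0 ≤ (q - 1) ^ d := pow_nonneg (by linarith) d
  rw [Real.mul_rpow hMq0 (integral_nonneg fun x => by positivity)] at h
  refine le_of_mul_le_mul_left (h.trans ?_) (hpos.trans_le hJ2)
  have := mul_le_mul_of_nonneg_right hJ2 (mul_nonneg hq1 hI2)
  linarith

lemma sph_integrable {X : Type*} [TopologicalSpace X] [CompactSpace X] [MeasurableSpace X]
    [BorelSpace X] (μ : Measure X) [IsProbabilityMeasure μ] (f : X → ℝ)
    (hf : Continuous f) : Integrable f μ :=
  hf.integrable_of_hasCompactSupport (HasCompactSupport.of_compactSpace f)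

lemma sphere_hc {μ : Measure (Sph n)} [IsProbabilityMeasure μ] (hμ : Inv μ)
    (q : ℝ) (hq : 2 ≤ q) {d : ℕ}
    {f : EuclideanSpace ℝ (Fin (n + 1)) → ℝ} (hf : IsPol d f) :
    (∫ ξ, |f ξ.1| ^ q ∂μ) ^ (2 / q) ≤ (q - 1) ^ d * ∫ ξ, f ξ.1 ^ 2 ∂μ := by
  have hq0 : 0 < q := by linarith
  obtain ⟨a, b, e, ha, hb, hde, h⟩ := hf.decomp
  have h' : ∀ ξ : Sph n, f ξ.1 = a ξ.1 + b ξ.1 := fun ξ => h ξ.1 (by simp)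
  simp only [h']
  have hac := ha.isPol.continuous
  have hbc := hb.isPol.continuous
  have hcont : ∀ f : Sph n → ℝ, Continuous f → Continuous fun x => |f x| ^ q :=
    fun f hf => hf.abs.rpow_const fun _ => Or.inr hq0.le
  -- antipodal symmetry
  have hanti : ∀ x, |a (-x) + b (-x)| = |a x - b x| := by
    intro x
    have e1 := ha.smul (-1) x
    have e2 := hb.smul (-1) x
    rw [neg_one_smul] at e1 e2
    rw [e1, e2]
    have : (-1 : ℝ) ^ e = - (-1) ^ d := by
      rcases hde with rfl | ⟨rfl, rfl, _⟩
      · rw [pow_succ]; ring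
      · norm_num
    rw [this, show (-1 : ℝ) ^ d * a x + - (-1) ^ d * b x = (-1) ^ d * (a x - b x) by ring, abs_mul]
    simp
  have hsq : ∀ x, (a (-x) + b (-x)) ^ 2 = (a x - b x) ^ 2 := fun x => by
    rw [← sq_abs, hanti, sq_abs]
  have hneg : ∀ F : EuclideanSpace ℝ (Fin (n + 1)) → ℝ, Continuous F →
      ∫ ξ : Sph n, F (-ξ.1) ∂μ = ∫ ξ, F ξ.1 ∂μ := fun F hF =>
    hμ.integral (LinearIsometryEquiv.neg ℝ) F hF
  have hs : ∫ ξ : Sph n, (a ξ.1 + b ξ.1) ^ 2 ∂μ = ∫ ξ : Sph n, a ξ.1 ^ 2 ∂μ + ∫ ξ : Sph n, b ξ.1 ^ 2 ∂μ := by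
    have h1 := hneg (fun x => (a x + b x) ^ 2) (by fun_prop)
    simp only [hsq] at h1
    have h2 : ∫ ξ : Sph n, (a ξ.1 + b ξ.1) ^ 2 ∂μ =
        2⁻¹ * (∫ ξ : Sph n, (a ξ.1 + b ξ.1) ^ 2 ∂μ + ∫ ξ : Sph n, (a ξ.1 - b ξ.1) ^ 2 ∂μ) := by
      rw [h1]; ring
    rw [h2, ← integral_add (sph_integrable _ _ (by fun_prop)) (sph_integrable _ _ (by fun_prop)),
      ← integral_add (sph_integrable _ _ (by fun_prop)) (sph_integrable _ _ (by fun_prop)),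
      ← integral_const_mul]
    congr 1; funext x; ring
  rw [hs]
  have c1 := hcont (fun ξ => a ξ.1 + b ξ.1) (by fun_prop)
  have c2 := hcont (fun ξ => a ξ.1 - b ξ.1) (by fun_prop)
  refine comb μ q hq d (fun ξ => a ξ.1) (fun ξ => b ξ.1)
    (by fun_prop : Continuous _).aestronglyMeasurable
    (by fun_prop : Continuous _).aestronglyMeasurable
    (sph_integrable _ _ (hcont _ (by fun_prop))) (sph_integrable _ _ (hcont _ (by fun_prop))) _
    (integral_nonneg fun x => Real.rpow_nonneg (abs_nonneg _) _) ?_ (sphere_hom hμ q hq ha) ?_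
  · have h1 := hneg (fun x => |a x + b x| ^ q)
      ((hac.add hbc).abs.rpow_const fun _ => Or.inr hq0.le)
    simp only [hanti] at h1
    have h2 : ∫ ξ : Sph n, |a ξ.1 + b ξ.1| ^ q ∂μ =
        2⁻¹ * (∫ ξ : Sph n, |a ξ.1 + b ξ.1| ^ q ∂μ + ∫ ξ : Sph n, |a ξ.1 - b ξ.1| ^ q ∂μ) := by
      rw [h1]; ring
    rw [h2, ← integral_add (sph_integrable _ _ c1) (sph_integrable _ _ c2), ← integral_const_mul]
    refine integral_mono (sph_integrable _ _ (by fun_prop)) (sph_integrable _ _ ?_) ?_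
    · exact Continuous.rpow_const (by fun_prop) fun _ => Or.inr (by linarith)
    · intro x
      have := two_point q hq (a x) (b x)
      beta_reduce
      linarith
  · have hB := sphere_hom hμ q hq hb
    rcases hde with rfl | ⟨rfl, rfl, h3⟩
    · have := mul_le_mul_of_nonneg_left hB (by linarith : 0 ≤ q - 1)
      rw [pow_succ]
      linarith
    · simp [h3, Real.zero_rpow hq0.ne', Real.zero_rpow (by positivity : 2 / q ≠ 0)]

end SphereHC

namespace SphereHC
open MeasureTheory ProbabilityTheory Filter
open scoped ENNReal Topology
variable {n : ℕ}

lemma tensor {X : Type*} [TopologicalSpace X] [CompactSpace X] [SecondCountableTopology X]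
    [MeasurableSpace X] [BorelSpace X] (μ : Measure X) [IsProbabilityMeasure μ]
    (q : ℝ) (hq : 2 ≤ q) (C : ℝ≥0∞) (V : (X → ℝ) → Prop)
    (hV : ∀ f, V f → Continuous f →
      (∫⁻ x, ‖f x‖ₑ ^ q ∂μ) ^ (2 / q) ≤ C * ∫⁻ x, ‖f x‖ₑ ^ (2 : ℝ) ∂μ)
    (k : ℕ) (F : (Fin k → X) → ℝ) (hF : Continuous F)
    (hs : ∀ (j : Fin k) (ξ : Fin k → X), V (fun x => F (Function.update ξ j x))) :
    (∫⁻ ξ, ‖F ξ‖ₑ ^ q ∂(Measure.pi fun _ => μ)) ^ (2 / q)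
      ≤ C ^ k * ∫⁻ ξ, ‖F ξ‖ₑ ^ (2 : ℝ) ∂(Measure.pi fun _ => μ) := by
  have hq0 : 0 < q := by linarith
  induction k with
  | zero =>
    have hc : ∀ ξ : Fin 0 → X, F ξ = F Fin.elim0 := fun ξ => congrArg F (Subsingleton.elim _ _)
    simp only [hc, lintegral_const, measure_univ, mul_one, pow_zero, one_mul]
    rw [← ENNReal.rpow_mul, mul_div_cancel₀ _ hq0.ne']
  | succ k ih =>
    obtain ⟨x0⟩ : Nonempty X := μ.nonempty_of_neZero
    have hcons : Continuous fun p : X × (Fin k → X) => (Fin.cons p.1 p.2 : Fin (k + 1) → X) := by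
      refine continuous_pi fun i => ?_
      refine Fin.cases ?_ (fun j => ?_) i
      · simpa using continuous_fst
      · simp only [Fin.cons_succ]; fun_prop
    have hG : Continuous fun p : X × (Fin k → X) => F (Fin.cons p.1 p.2) := hF.comp hcons
    have key : ∀ r : ℝ, ∫⁻ ξ, ‖F ξ‖ₑ ^ r ∂(Measure.pi fun _ : Fin (k + 1) => μ) =
        ∫⁻ p : X × (Fin k → X), ‖F (Fin.cons p.1 p.2)‖ₑ ^ r ∂(μ.prod (Measure.pi fun _ => μ)) := by
      intro r
      have hm := (measurePreserving_piFinSuccAbove (fun _ : Fin (k + 1) => μ) 0).symm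
      rw [← hm.lintegral_comp_emb (MeasurableEquiv.measurableEmbedding _)]
      refine lintegral_congr fun p => ?_
      simp [MeasurableEquiv.piFinSuccAbove, Fin.insertNthEquiv]
    have hmeas : ∀ r : ℝ, Measurable fun p : X × (Fin k → X) => ‖F (Fin.cons p.1 p.2)‖ₑ ^ r :=
      fun r => hG.measurable.enorm.pow_const r
    rw [key q, key 2, lintegral_prod_symm _ (hmeas q).aemeasurable, lintegral_prod _ (hmeas 2).aemeasurable]
    obtain ⟨B, hB⟩ : ∃ B : ℝ, ∀ p : X × (Fin k → X), ‖F (Fin.cons p.1 p.2)‖ ≤ B := by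
      obtain ⟨B, hB⟩ := (isCompact_range hG).isBounded.exists_norm_le
      exact ⟨B, fun p => hB _ ⟨p, rfl⟩⟩
    have hBe : ∀ x y, ‖F (Fin.cons x y)‖ₑ ≤ ENNReal.ofReal B := fun x y => by
      rw [← ofReal_norm]; exact ENNReal.ofReal_le_ofReal (hB (x, y))
    have h1 : ∀ y : Fin k → X, ∫⁻ x, ‖F (Fin.cons x y)‖ₑ ^ q ∂μ ≤
        C ^ (q / 2) * (∫⁻ x, ‖F (Fin.cons x y)‖ₑ ^ (2 : ℝ) ∂μ) ^ (q / 2) := by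
      intro y
      have hv := hs 0 (Fin.cons x0 y)
      simp only [Fin.update_cons_zero] at hv
      have := hV _ hv (hG.comp (continuous_id.prodMk continuous_const))
      have h2 := ENNReal.rpow_le_rpow this (by positivity : 0 ≤ q / 2)
      rwa [← ENNReal.rpow_mul, show 2 / q * (q / 2) = 1 by field_simp, ENNReal.rpow_one,
        ENNReal.mul_rpow_of_nonneg _ _ (by positivity)] at h2
    have hHm : Measurable fun y : Fin k → X => ∫⁻ x, ‖F (Fin.cons x y)‖ₑ ^ (2 : ℝ) ∂μ :=
      ((hmeas 2).comp measurable_swap).lintegral_prod_right'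
    have h2 : ∫⁻ y, ∫⁻ x, ‖F (Fin.cons x y)‖ₑ ^ q ∂μ ∂(Measure.pi fun _ => μ) ≤
        C ^ (q / 2) * ∫⁻ y, (∫⁻ x, ‖F (Fin.cons x y)‖ₑ ^ (2 : ℝ) ∂μ) ^ (q / 2)
          ∂(Measure.pi fun _ => μ) := by
      rw [← lintegral_const_mul _ (hHm.pow_const _)]
      exact lintegral_mono h1
    have h3 := ENNReal.rpow_le_rpow h2 (by positivity : 0 ≤ 2 / q)
    rw [ENNReal.mul_rpow_of_nonneg _ _ (by positivity), ← ENNReal.rpow_mul,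
      show q / 2 * (2 / q) = 1 by field_simp, ENNReal.rpow_one] at h3
    have h4 := minkowski_lintegral μ (Measure.pi fun _ : Fin k => μ) (q / 2) (by linarith)
      (fun x y => ‖F (Fin.cons x y)‖ₑ ^ (2 : ℝ)) (hmeas 2) (by
        have hle : ∫⁻ y, (∫⁻ x, ‖F (Fin.cons x y)‖ₑ ^ (2 : ℝ) ∂μ) ^ (q / 2)
            ∂(Measure.pi fun _ : Fin k => μ) ≤ ∫⁻ y, (∫⁻ x, (ENNReal.ofReal B) ^ (2 : ℝ) ∂μ) ^ (q / 2)
            ∂(Measure.pi fun _ : Fin k => μ) := by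
          refine lintegral_mono fun y => ENNReal.rpow_le_rpow (lintegral_mono fun x => ?_) (by positivity)
          exact ENNReal.rpow_le_rpow (hBe x y) (by norm_num)
        refine ne_top_of_le_ne_top ?_ hle
        simp only [lintegral_const, measure_univ, mul_one]
        exact ENNReal.rpow_ne_top_of_nonneg (by positivity)
          (ENNReal.rpow_ne_top_of_nonneg (by norm_num) ENNReal.ofReal_ne_top))
    rw [one_div_div] at h4
    refine h3.trans ?_
    rw [pow_succ', mul_assoc]
    refine mul_le_mul_right (h4.trans ?_) C
    have hm2 : Measurable fun x : X => ∫⁻ y, ‖F (Fin.cons x y)‖ₑ ^ (2 : ℝ) ∂(Measure.pi fun _ : Fin k => μ) :=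
      (hmeas 2).lintegral_prod_right'
    rw [← lintegral_const_mul _ hm2]
    refine lintegral_mono fun x => ?_
    have := ih (fun y => F (Fin.cons x y)) (hG.comp (continuous_const.prodMk continuous_id)) (by
      intro j ξ
      have := hs j.succ (Fin.cons x ξ)
      simpa only [Fin.cons_update] using this)
    refine le_trans (le_of_eq ?_) this
    congr 1
    refine lintegral_congr fun y => ?_
    rw [← ENNReal.rpow_mul, mul_div_cancel₀ _ two_ne_zero]

lemma lint_conv {X : Type*} [TopologicalSpace X] [CompactSpace X]
    [MeasurableSpace X] [BorelSpace X] (μ : Measure X) [IsProbabilityMeasure μ]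
    (r : ℝ) (hr : 0 ≤ r) (f : X → ℝ) (hf : Continuous f) :
    ∫⁻ x, ‖f x‖ₑ ^ r ∂μ = ENNReal.ofReal (∫ x, |f x| ^ r ∂μ) := by
  rw [ofReal_integral_eq_lintegral_ofReal
    (sph_integrable μ _ (hf.abs.rpow_const fun _ => Or.inr hr))
    (Eventually.of_forall fun x => by positivity)]
  refine lintegral_congr fun x => ?_
  rw [Real.enorm_eq_ofReal_abs, ENNReal.ofReal_rpow_of_nonneg (abs_nonneg _) hr]

lemma hc_conv {X : Type*} [TopologicalSpace X] [CompactSpace X]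
    [MeasurableSpace X] [BorelSpace X] (μ : Measure X) [IsProbabilityMeasure μ]
    (q : ℝ) (hq : 2 ≤ q) (c : ℝ) (hc : 0 ≤ c) (f : X → ℝ) (hf : Continuous f) :
    ((∫⁻ x, ‖f x‖ₑ ^ q ∂μ) ^ (2 / q) ≤ ENNReal.ofReal c * ∫⁻ x, ‖f x‖ₑ ^ (2 : ℝ) ∂μ) ↔
    (∫ x, |f x| ^ q ∂μ) ^ (2 / q) ≤ c * ∫ x, f x ^ 2 ∂μ := by
  rw [lint_conv μ q (by linarith) f hf, lint_conv μ 2 (by norm_num) f hf,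
    ENNReal.ofReal_rpow_of_nonneg (integral_nonneg fun x => by positivity) (by positivity),
    ← ENNReal.ofReal_mul hc, ENNReal.ofReal_le_ofReal_iff
      (mul_nonneg hc (integral_nonneg fun x => by positivity))]
  simp only [Real.rpow_two, sq_abs]

lemma section_isPol {d k : ℕ} (P : MvPolynomial (Fin k × Fin (n + 1)) ℝ)
    (hdeg : ∀ m ∈ P.support, ∀ j : Fin k, ∑ i : Fin (n + 1), m (j, i) ≤ d)
    (j : Fin k) (ξ : Fin k → Sph n) :
    ∃ g : EuclideanSpace ℝ (Fin (n + 1)) → ℝ, IsPol d g ∧ ∀ x : Sph n,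
      MvPolynomial.eval (fun ji : Fin k × Fin (n + 1) =>
        (Function.update ξ j x ji.1).1 ji.2) P = g x.1 := by
  refine ⟨fun x => ∑ m ∈ P.support, (P.coeff m *
    ∏ j' ∈ Finset.univ.erase j, ∏ i, (ξ j').1 i ^ m (j', i)) * ∏ i, x i ^ m (j, i), ?_, ?_⟩
  · exact IsPol.sum _ fun m hm =>
      ((IsPol.prod_pow Finset.univ fun i => m (j, i)).const_mul _).mono (hdeg m hm j)
  · intro x
    rw [MvPolynomial.eval_eq']
    refine Finset.sum_congr rfl fun m _ => ?_
    rw [mul_assoc, Fintype.prod_prod_type, ← Finset.mul_prod_erase _ _ (Finset.mem_univ j)]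
    rw [mul_comm (∏ i, _ ^ _)]
    congr 2
    · refine Finset.prod_congr rfl fun j' hj' => ?_
      simp only [Function.update_of_ne (Finset.ne_of_mem_erase hj')]
    · simp only [Function.update_self]

end SphereHC

theorem product_sphere_poly_hypercontractive {n d k : ℕ}
    (μ : Measure (Metric.sphere (0 : EuclideanSpace ℝ (Fin (n + 1))) 1))
    [IsProbabilityMeasure μ]
    (hinv : ∀ U : EuclideanSpace ℝ (Fin (n + 1)) ≃ₗᵢ[ℝ] EuclideanSpace ℝ (Fin (n + 1)),
      Measure.map (fun ξ : Metric.sphere (0 : EuclideanSpace ℝ (Fin (n + 1))) 1 =>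
        (⟨U ξ.1, by
          rw [mem_sphere_zero_iff_norm, U.norm_map, ← mem_sphere_zero_iff_norm]
          exact ξ.2⟩ : Metric.sphere (0 : EuclideanSpace ℝ (Fin (n + 1))) 1)) μ = μ)
    (P : MvPolynomial (Fin k × Fin (n + 1)) ℝ)
    (hdeg : ∀ m ∈ P.support, ∀ j : Fin k, ∑ i : Fin (n + 1), m (j, i) ≤ d)
    (q : ℝ) (hq : 2 ≤ q) :
    (∫ ξ : Fin k → Metric.sphere (0 : EuclideanSpace ℝ (Fin (n + 1))) 1,
        |MvPolynomial.eval (fun ji : Fin k × Fin (n + 1) => (ξ ji.1).1 ji.2) P| ^ q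
        ∂(Measure.pi fun _ => μ)) ^ (1 / q)
      ≤ (q - 1) ^ ((d : ℝ) * k / 2) *
          (∫ ξ : Fin k → Metric.sphere (0 : EuclideanSpace ℝ (Fin (n + 1))) 1,
            (MvPolynomial.eval (fun ji : Fin k × Fin (n + 1) => (ξ ji.1).1 ji.2) P) ^ 2
            ∂(Measure.pi fun _ => μ)) ^ ((1 : ℝ) / 2) := by
  have hq0 : 0 < q := by linarith
  have hq1 : 0 ≤ q - 1 := by linarith
  have hμ : SphereHC.Inv μ := fun U =>
    ⟨_, Continuous.subtype_mk (U.continuous.comp continuous_subtype_val) _, fun ξ => rfl, hinv U⟩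
  set F : (Fin k → Metric.sphere (0 : EuclideanSpace ℝ (Fin (n + 1))) 1) → ℝ := fun ξ =>
    MvPolynomial.eval (fun ji : Fin k × Fin (n + 1) => (ξ ji.1).1 ji.2) P with hFdef
  have hF : Continuous F := by
    refine (MvPolynomial.continuous_eval P).comp (continuous_pi fun ji => ?_)
    fun_prop
  have h := SphereHC.tensor μ q hq (ENNReal.ofReal ((q - 1) ^ d))
    (fun f => ∃ g : EuclideanSpace ℝ (Fin (n + 1)) → ℝ, SphereHC.IsPol d g ∧ ∀ x, f x = g x.1)
    (by
      rintro f ⟨g, hg, hfg⟩ hf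
      rw [SphereHC.hc_conv μ q hq _ (by positivity) f hf]
      simp only [hfg]
      exact SphereHC.sphere_hc hμ q hq hg)
    k F hF (fun j ξ => SphereHC.section_isPol P hdeg j ξ)
  rw [← ENNReal.ofReal_pow (by positivity), SphereHC.hc_conv _ q hq _ (by positivity) F hF] at h
  have hA : 0 ≤ ∫ ξ, |F ξ| ^ q ∂(Measure.pi fun _ => μ) := integral_nonneg fun x => by positivity
  have h2 := Real.rpow_le_rpow (by positivity) h (by norm_num : (0:ℝ) ≤ 1 / 2)
  rw [← Real.rpow_mul hA, Real.mul_rpow (by positivity) (integral_nonneg fun x => by positivity),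
    show 2 / q * (1 / 2) = 1 / q by field_simp, ← pow_mul, ← Real.rpow_natCast,
    ← Real.rpow_mul hq1] at h2
  convert h2 using 3
  push_cast
  ring
end
end

section
/- There is a universal constant c > 0 such that every k-player XOR game G with n possible inputs per player has classical bias β(G) ≥ c · k^{−3/2} · n^{−(k−1)/2}. -/
noncomputable section
open Finset
open scoped NNReal

theorem holder_two {ι : Type*} (s : Finset ι) (f g : ι → ℝ≥0) (θ η : ℝ) (h0 : 0 < θ) (h1 : 0 < η)
    (h : θ + η = 1) :
    ∑ i ∈ s, f i ^ θ * g i ^ η ≤ (∑ i ∈ s, f i) ^ θ * (∑ i ∈ s, g i) ^ η := by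
  have hpq : (θ⁻¹).HolderConjugate (η⁻¹) := by
    rw [Real.holderConjugate_iff]
    refine ⟨(one_lt_inv₀ h0).2 (by linarith), by simpa using h⟩
  have := NNReal.inner_le_Lp_mul_Lq s (fun i => f i ^ θ) (fun i => g i ^ η) hpq
  simpa [← NNReal.rpow_mul, h0.ne', h1.ne'] using this

theorem holder_fin {ι : Type*} [Fintype ι] (m : ℕ) (hm : 0 < m) (f : Fin m → ι → ℝ≥0) :
    ∑ t, ∏ j, f j t ^ (1 / (m : ℝ)) ≤ ∏ j, (∑ t, f j t) ^ (1 / (m : ℝ)) := by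
  have hm' : (m : ℝ≥0) ≠ 0 := by exact_mod_cast hm.ne'
  have hmr : (1 / (m : ℝ)) ≠ 0 := by positivity
  by_cases hz : ∃ j, ∑ t, f j t = 0
  · obtain ⟨j, hj⟩ := hz
    have : ∀ t, f j t = 0 := fun t => by
      have := (Finset.sum_eq_zero_iff.1 hj) t (mem_univ _)
      exact this
    refine le_trans (le_of_eq ?_) (zero_le)
    refine Finset.sum_eq_zero fun t _ => Finset.prod_eq_zero (mem_univ j) ?_
    rw [this t, NNReal.zero_rpow hmr]
  · push Not at hz
    have key : ∀ t, ∏ j, f j t ^ (1 / (m : ℝ)) ≤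
        (∏ j, (∑ t, f j t) ^ (1 / (m : ℝ))) * ∑ j, (1 / (m : ℝ≥0)) * (f j t / ∑ t, f j t) := by
      intro t
      have := NNReal.geom_mean_le_arith_mean_weighted (univ : Finset (Fin m))
        (fun _ => 1 / (m : ℝ≥0)) (fun j => f j t / ∑ t, f j t) (by simp [hm'])
      refine le_trans (le_of_eq ?_) (mul_le_mul_right this _)
      rw [← Finset.prod_mul_distrib]
      refine Finset.prod_congr rfl fun j _ => ?_
      rw [NNReal.coe_div, NNReal.coe_one, NNReal.coe_natCast, ← NNReal.mul_rpow,
        mul_div_cancel₀ _ (hz j)]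
    refine (Finset.sum_le_sum fun t _ => key t).trans ?_
    rw [← Finset.mul_sum, Finset.sum_comm]
    refine le_of_eq ?_
    have : ∀ j, ∑ t, (1 / (m : ℝ≥0)) * (f j t / ∑ t, f j t) = 1 / (m : ℝ≥0) := fun j => by
      rw [← Finset.mul_sum, ← Finset.sum_div, div_self (hz j), mul_one]
    simp only [this]
    simp [hm']

theorem sum_insertNth {α M : Type*} [Fintype α] [AddCommMonoid M] {k : ℕ} (j : Fin (k+1))
    (F : (Fin (k+1) → α) → M) :
    ∑ i, F i = ∑ y : Fin k → α, ∑ t : α, F (j.insertNth t y) := by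
  classical
  rw [← (Fin.insertNthEquiv (fun _ => α) j).sum_comp, Fintype.sum_prod_type, Finset.sum_comm]
  rfl

theorem removeNth_succ_cons {α : Type*} {k : ℕ} (j : Fin (k+1)) (t : α) (y : Fin (k+1) → α) :
    j.succ.removeNth (Fin.cons t y : Fin (k+2) → α) = Fin.cons t (j.removeNth y) := by
  funext l
  refine Fin.cases ?_ (fun l => ?_) l
  · simp [Fin.removeNth]
  · simp [Fin.removeNth]

theorem sum_fin_cons {α M : Type*} [Fintype α] [AddCommMonoid M] {k : ℕ} 
    (F : (Fin (k+1) → α) → M) :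
    ∑ i, F i = ∑ y : Fin k → α, ∑ t : α, F (Fin.cons t y) := by
  rw [sum_insertNth 0]; simp

theorem loomis_whitney {α : Type*} [Fintype α] (k : ℕ) (g : Fin (k+2) → (Fin (k+1) → α) → ℝ≥0) :
    ∑ i : Fin (k+2) → α, ∏ j, g j (j.removeNth i) ^ (1 / ((k+1 : ℕ) : ℝ)) ≤
      ∏ j, (∑ y, g j y) ^ (1 / ((k+1 : ℕ) : ℝ)) := by
  induction k with
  | zero =>
    rw [sum_fin_cons]
    simp only [Fin.prod_univ_succ, removeNth_succ_cons, Fin.removeNth_zero, Fin.tail_cons]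
    simp only [zero_add, Nat.cast_one, div_one, NNReal.rpow_one, Fin.prod_univ_zero,
      mul_one, ← Finset.mul_sum]
    have : ∀ y : Fin 1 → α, ∑ t, g (Fin.succ 0) (Fin.cons t (Fin.tail y)) = ∑ z, g (Fin.succ 0) z := by
      intro y
      rw [sum_fin_cons, Fintype.sum_eq_single (Fin.tail y)]
      intro z hz
      exact absurd (Subsingleton.elim _ _) hz
    simp only [this, ← Finset.sum_mul]
    exact le_rfl
  | succ k ih =>
    rw [sum_fin_cons]
    simp only [Fin.prod_univ_succ (n := k+2), removeNth_succ_cons, Fin.removeNth_zero, Fin.tail_cons,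
       ← Finset.mul_sum]
    have h1 := ih (fun j y => ∑ t, g j.succ (Fin.cons t y))
    set r : ℝ := 1 / ((k+1+1 : ℕ) : ℝ) with hr
    set r' : ℝ := 1 / ((k+1 : ℕ) : ℝ) with hr'
    have hrp : 0 < r := by positivity
    have h1r : r' * (1 - r) = r := by
      rw [hr, hr']; push_cast; field_simp; ring
    have h1r0 : 0 < 1 - r := by
      have : 0 < r' := by positivity
      by_contra hc
      push Not at hc
      nlinarith
    have h2 : ∀ y : Fin (k+2) → α,
        ∑ t, ∏ j : Fin (k+2), g j.succ (Fin.cons t (j.removeNth y)) ^ r ≤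
        (∏ j : Fin (k+2), (∑ t, g j.succ (Fin.cons t (j.removeNth y))) ^ r') ^ (1 - r) := by
      intro y
      refine (holder_fin (k+2) (by omega)
        (fun j t => g j.succ (Fin.cons t (j.removeNth y)))).trans (le_of_eq ?_)
      rw [← NNReal.finsetProd_rpow]
      refine Finset.prod_congr rfl fun j _ => ?_
      rw [← NNReal.rpow_mul, h1r]
    calc _ ≤ ∑ y : Fin (k+2) → α, g 0 y ^ r *
          (∏ j : Fin (k+2), (∑ t, g j.succ (Fin.cons t (j.removeNth y))) ^ r') ^ (1 - r) :=
          Finset.sum_le_sum fun y _ => mul_le_mul_right (h2 y) _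
      _ ≤ _ := holder_two _ _ _ r (1-r) hrp h1r0 (by ring)
      _ ≤ (∑ y, g 0 y) ^ r * (∏ j : Fin (k+2), (∑ y : Fin (k+1) → α, ∑ t, g j.succ (Fin.cons t y)) ^ r') ^ (1 - r) := by
          gcongr
      _ = _ := by
          rw [← NNReal.finsetProd_rpow]
          congr 1
          refine Finset.prod_congr rfl fun j _ => ?_
          rw [← NNReal.rpow_mul, h1r, ← sum_fin_cons (g j.succ)]

theorem interp {α : Type*} [Fintype α] (k : ℕ) (a : (Fin (k+2) → α) → ℝ≥0)
    (b : Fin (k+2) → (Fin (k+1) → α) → ℝ≥0)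
    (hb : ∀ j y, b j y ^ (2:ℝ) = ∑ t, a (j.insertNth t y) ^ (2:ℝ)) (B : ℝ≥0)
    (hB : ∀ j, ∑ y, b j y ^ (2 * ((k:ℝ)+1) / ((k:ℝ)+2)) ≤ B) :
    ∑ i, a i ^ (2 * ((k:ℝ)+2) / ((k:ℝ)+3)) ≤ B ^ (((k:ℝ)+2)^2 / (((k:ℝ)+1) * ((k:ℝ)+3))) := by
  set W : (Fin (k+2) → α) → ℝ≥0 := fun i => ∏ j, b j (j.removeNth i) with hW
  have hba : ∀ i j, a i ≤ b j (j.removeNth i) := by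
    intro i j
    rw [← NNReal.rpow_le_rpow_iff (z := 2) (by norm_num), hb]
    have := Finset.single_le_sum (f := fun t => a (j.insertNth t (j.removeNth i)) ^ (2:ℝ))
      (fun _ _ => zero_le) (mem_univ (i j))
    simpa using this
  have hWa : ∀ i, a i ≠ 0 → W i ≠ 0 := by
    intro i hi
    refine Finset.prod_ne_zero_iff.2 fun j _ hj => hi ?_
    have := hba i j
    rw [hj] at this
    exact le_antisymm this zero_le
  -- first factor
  have h1 : ∑ i, a i ^ (2:ℝ) * W i ^ (-2 / ((k:ℝ)+2)^2) ≤ B := by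
    have hK : ((k+2 : ℕ) : ℝ≥0) ≠ 0 := by positivity
    have step : ∀ i, W i ^ (-2 / ((k:ℝ)+2)^2) ≤
        ∑ j, (1 / ((k+2 : ℕ) : ℝ≥0)) * b j (j.removeNth i) ^ (-2 / ((k:ℝ)+2)) := by
      intro i
      refine le_trans (le_of_eq ?_) (NNReal.geom_mean_le_arith_mean_weighted
        (univ : Finset (Fin (k+2))) (fun _ => 1 / ((k+2 : ℕ) : ℝ≥0))
        (fun j => b j (j.removeNth i) ^ (-2 / ((k:ℝ)+2))) (by
          rw [Finset.sum_const, Finset.card_univ, Fintype.card_fin, nsmul_eq_mul, mul_one_div,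
            div_self hK]))
      rw [hW, ← NNReal.finsetProd_rpow]
      refine Finset.prod_congr rfl fun j _ => ?_
      rw [← NNReal.rpow_mul]
      congr 1
      push_cast
      field_simp
    calc _ ≤ ∑ i, a i ^ (2:ℝ) * ∑ j, (1 / ((k+2 : ℕ) : ℝ≥0)) * b j (j.removeNth i) ^ (-2 / ((k:ℝ)+2)) :=
          Finset.sum_le_sum fun i _ => mul_le_mul_right (step i) _
      _ = ∑ j, (1 / ((k+2 : ℕ) : ℝ≥0)) * ∑ i, a i ^ (2:ℝ) * b j (j.removeNth i) ^ (-2 / ((k:ℝ)+2)) := by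
          simp only [Finset.mul_sum]
          rw [Finset.sum_comm]
          refine Finset.sum_congr rfl fun j _ => Finset.sum_congr rfl fun i _ => ?_
          ring
      _ = ∑ j, (1 / ((k+2 : ℕ) : ℝ≥0)) * ∑ y, b j y ^ (2 * ((k:ℝ)+1) / ((k:ℝ)+2)) := by
          refine Finset.sum_congr rfl fun j _ => ?_
          congr 1
          rw [sum_insertNth j]
          refine Finset.sum_congr rfl fun y _ => ?_
          simp only [Fin.removeNth_insertNth]
          have he : (2:ℝ) + -2 / ((k:ℝ)+2) = 2 * ((k:ℝ)+1) / ((k:ℝ)+2) := by field_simp; ring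
          rw [← Finset.sum_mul, ← hb, ← NNReal.rpow_add', he]
          rw [he]; positivity
      _ ≤ ∑ j : Fin (k+2), (1 / ((k+2 : ℕ) : ℝ≥0)) * B :=
          Finset.sum_le_sum fun j _ => mul_le_mul_right (hB j) _
      _ = B := by
          rw [Finset.sum_const, Finset.card_univ, Fintype.card_fin, nsmul_eq_mul, ← mul_assoc,
            mul_one_div, div_self hK, one_mul]
  have h2 : ∑ i, W i ^ (2 / ((k:ℝ)+2)) ≤ B ^ (((k:ℝ)+2) / ((k:ℝ)+1)) := by
    have := loomis_whitney k (fun j y => b j y ^ (2 * ((k:ℝ)+1) / ((k:ℝ)+2)))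
    refine le_trans (le_of_eq ?_) (this.trans ?_)
    · refine Finset.sum_congr rfl fun i _ => ?_
      rw [hW, ← NNReal.finsetProd_rpow]
      refine Finset.prod_congr rfl fun j _ => ?_
      rw [← NNReal.rpow_mul]
      congr 1
      push_cast
      field_simp
    · calc _ ≤ ∏ j : Fin (k+2), B ^ (1 / ((k+1 : ℕ) : ℝ)) :=
            Finset.prod_le_prod' fun j _ => NNReal.rpow_le_rpow (hB j) (by positivity)
        _ = _ := by
            rw [Finset.prod_const, Finset.card_univ, Fintype.card_fin, ← NNReal.rpow_natCast,
              ← NNReal.rpow_mul]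
            congr 1
            push_cast
            field_simp
  have h3 := holder_two univ (fun i => a i ^ (2:ℝ) * W i ^ (-2 / ((k:ℝ)+2)^2))
    (fun i => W i ^ (2 / ((k:ℝ)+2))) (((k:ℝ)+2)/((k:ℝ)+3)) (1/((k:ℝ)+3)) (by positivity)
    (by positivity) (by field_simp; ring)
  calc _ ≤ _ := le_trans (le_of_eq ?_) h3
    _ ≤ B ^ (((k:ℝ)+2)/((k:ℝ)+3)) * (B ^ (((k:ℝ)+2) / ((k:ℝ)+1))) ^ (1/((k:ℝ)+3)) := by
        gcongr
    _ = _ := by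
        rw [← NNReal.rpow_mul, ← NNReal.rpow_add_of_nonneg _ (by positivity) (by positivity)]
        congr 1
        field_simp
        ring
  refine Finset.sum_congr rfl fun i _ => ?_
  by_cases hi : a i = 0
  · rw [hi, NNReal.zero_rpow (by positivity), NNReal.zero_rpow (by positivity), zero_mul,
      NNReal.zero_rpow (by positivity), zero_mul]
  · rw [NNReal.mul_rpow, ← NNReal.rpow_mul, ← NNReal.rpow_mul, ← NNReal.rpow_mul, mul_assoc,
      ← NNReal.rpow_add (hWa i hi)]
    have : -2 / ((k:ℝ) + 2) ^ 2 * (((k:ℝ) + 2) / ((k:ℝ) + 3)) + 2 / ((k:ℝ) + 2) * (1 / ((k:ℝ) + 3)) = 0 := by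
      field_simp; ring
    rw [this, NNReal.rpow_zero, mul_one]
    congr 1
    ring

/-- sign of a Boolean -/
def sg (x : Bool) : ℝ := if x then (1 : ℝ) else -1

theorem rad_moments (n : ℕ) (c : Fin n → ℝ) :
    ∑ x : Fin n → Bool, (∑ t, c t * sg (x t)) ^ 2 = 2 ^ n * ∑ t, c t ^ 2 ∧
    ∑ x : Fin n → Bool, (∑ t, c t * sg (x t)) ^ 4 ≤ 3 * 2 ^ n * (∑ t, c t ^ 2) ^ 2 := by
  induction n with
  | zero => simp
  | succ n ih =>
    obtain ⟨i2, i4⟩ := ih (fun t => c t.succ)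
    set S : ℝ := ∑ t : Fin n, c t.succ ^ 2
    have e1 : ∑ y : Fin n → Bool, (1:ℝ) = 2 ^ n := by simp
    constructor
    · rw [sum_fin_cons]
      simp only [Fin.sum_univ_succ, Fin.cons_zero, Fin.cons_succ, Fintype.sum_bool]
      have : ∀ y : Fin n → Bool, (c 0 * sg true + ∑ t : Fin n, c t.succ * sg (y t)) ^ 2 +
          (c 0 * sg false + ∑ t : Fin n, c t.succ * sg (y t)) ^ 2 =
          2 * c 0 ^ 2 * 1 + 2 * (∑ t : Fin n, c t.succ * sg (y t)) ^ 2 := fun y => by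
        simp only [sg]; norm_num; ring
      simp only [this, Finset.sum_add_distrib, ← Finset.mul_sum, i2, e1]
      ring
    · rw [sum_fin_cons]
      simp only [Fin.sum_univ_succ, Fin.cons_zero, Fin.cons_succ, Fintype.sum_bool]
      have : ∀ y : Fin n → Bool, (c 0 * sg true + ∑ t : Fin n, c t.succ * sg (y t)) ^ 4 +
          (c 0 * sg false + ∑ t : Fin n, c t.succ * sg (y t)) ^ 4 =
          2 * c 0 ^ 4 * 1 + 12 * c 0 ^ 2 * (∑ t : Fin n, c t.succ * sg (y t)) ^ 2
            + 2 * (∑ t : Fin n, c t.succ * sg (y t)) ^ 4 := fun y => by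
        simp only [sg]; norm_num; ring
      simp only [this, Finset.sum_add_distrib, ← Finset.mul_sum, i2, e1]
      have : (0:ℝ) ≤ 2 ^ n * c 0 ^ 4 := by positivity
      rw [pow_succ 2 n]
      change _ ≤ 3 * (2 ^ n * 2) * (c 0 ^ 2 + S) ^ 2
      nlinarith

theorem khinchine (n : ℕ) (c : Fin n → ℝ) (p : ℝ) (hp : 0 < p) (hp2 : p < 2) :
    2 ^ n * (∑ t, ‖c t‖₊ ^ 2) ^ (p / 2) ≤
      (3:ℝ≥0) ^ ((2 - p) / 2) * ∑ x : Fin n → Bool, ‖∑ t, c t * sg (x t)‖₊ ^ p := by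
  obtain ⟨m2, m4⟩ := rad_moments n c
  set u : (Fin n → Bool) → ℝ≥0 := fun x => ‖∑ t, c t * sg (x t)‖₊ with hu
  set s : ℝ≥0 := ∑ t, ‖c t‖₊ ^ 2 with hs
  have n2 : ∑ x, u x ^ 2 = 2 ^ n * s := by
    apply NNReal.coe_injective
    push_cast [hu, hs]
    simpa using m2
  have n4 : ∑ x, u x ^ 4 ≤ 3 * 2 ^ n * s ^ 2 := by
    rw [← NNReal.coe_le_coe]
    push_cast [hu, hs]
    have h4 : ∀ z : ℝ, |z| ^ 4 = z ^ 4 := fun z => (by decide : Even 4).pow_abs z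
    simpa [h4] using m4
  by_cases hs0 : s = 0
  · rw [hs0, NNReal.zero_rpow (by positivity), mul_zero]; exact zero_le
  set P := ∑ x, u x ^ p with hP
  have h := holder_two univ (fun x => u x ^ p) (fun x => u x ^ 4) (2 / (4 - p)) ((2 - p) / (4 - p))
    (div_pos two_pos (by linarith)) (div_pos (by linarith) (by linarith))
    (by rw [← add_div, div_eq_one_iff_eq (by linarith)]; ring)
  have h4p : (4 - p) ≠ 0 := by linarith
  have hl : ∀ x, (u x ^ p) ^ (2 / (4 - p)) * (u x ^ 4) ^ ((2 - p) / (4 - p)) = u x ^ 2 := by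
    intro x
    rw [← NNReal.rpow_natCast (u x) 4, ← NNReal.rpow_mul, ← NNReal.rpow_mul, ← NNReal.rpow_natCast (u x) 2]
    have e : p * (2 / (4 - p)) + ((4:ℕ):ℝ) * ((2 - p) / (4 - p)) = ((2:ℕ):ℝ) := by
      push_cast; field_simp; ring
    rw [← NNReal.rpow_add' (by rw [e]; norm_num), e]
  simp only [hl, n2] at h
  have h' : 2 ^ n * s ≤ P ^ (2 / (4 - p)) * (3 * 2 ^ n * s ^ 2) ^ ((2 - p) / (4 - p)) :=
    h.trans (mul_le_mul_right (NNReal.rpow_le_rpow n4 (div_nonneg (by linarith) (by linarith))) _)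
  have h'' := NNReal.rpow_le_rpow (z := (4 - p) / 2) h' (by linarith)
  set N : ℝ≥0 := 2 ^ n with hN
  have hN0 : N ≠ 0 := by positivity
  rw [NNReal.mul_rpow, NNReal.mul_rpow, ← NNReal.rpow_mul, ← NNReal.rpow_mul] at h''
  have e1 : 2 / (4 - p) * ((4 - p) / 2) = 1 := by field_simp
  have e2 : (2 - p) / (4 - p) * ((4 - p) / 2) = (2 - p) / 2 := by field_simp
  rw [e1, e2, NNReal.rpow_one, NNReal.mul_rpow, NNReal.mul_rpow, ← NNReal.rpow_natCast s 2,
    ← NNReal.rpow_mul] at h''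
  have e3 : N ^ ((4 - p) / 2) = N * N ^ ((2 - p) / 2) := by
    rw [← NNReal.rpow_one_add' (by linarith)]; congr 1; ring
  have e4 : s ^ ((4 - p) / 2) = s ^ (p / 2) * s ^ (((2:ℕ):ℝ) * ((2 - p) / 2)) := by
    rw [← NNReal.rpow_add hs0]; congr 1; push_cast; ring
  rw [e3, e4] at h''
  have hpos : 0 < N ^ ((2 - p) / 2) * s ^ (((2:ℕ):ℝ) * ((2 - p) / 2)) :=
    mul_pos (NNReal.rpow_pos (pos_iff_ne_zero.2 hN0)) (NNReal.rpow_pos (pos_iff_ne_zero.2 hs0))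
  refine le_of_mul_le_mul_right ?_ hpos
  calc _ = _ := by ring
    _ ≤ _ := h''
    _ = _ := by ring

theorem const_step (k : ℕ) (M : ℝ≥0) :
    (3:ℝ≥0) ^ (1 / ((k:ℝ)+2)) * (((k:ℝ≥0)+1) * M) ^ (2 * ((k:ℝ)+1) / ((k:ℝ)+2)) ≤
      (((k:ℝ≥0)+2) * M) ^ (2 * ((k:ℝ)+1) / ((k:ℝ)+2)) := by
  rw [NNReal.mul_rpow, NNReal.mul_rpow, ← mul_assoc]
  refine mul_le_mul_left ?_ _
  have hb : (2:ℝ) * ((k:ℝ)+1)^(k+1) ≤ ((k:ℝ)+2)^(k+1) := by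
    have := one_add_mul_le_pow (a := 1/((k:ℝ)+1)) (by
      have : 0 ≤ 1/((k:ℝ)+1) := by positivity
      linarith) (k+1)
    have e : 1 + ((k+1:ℕ):ℝ) * (1/((k:ℝ)+1)) = 2 := by push_cast; field_simp; norm_num
    rw [e] at this
    calc _ ≤ (1 + 1/((k:ℝ)+1))^(k+1) * ((k:ℝ)+1)^(k+1) := by gcongr
      _ = _ := by rw [← mul_pow]; congr 1; field_simp; ring
  have hb' : (2:ℝ≥0) * ((k:ℝ≥0)+1)^(k+1) ≤ ((k:ℝ≥0)+2)^(k+1) := by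
    rw [← NNReal.coe_le_coe]; push_cast; exact hb
  have hb2 : (3:ℝ≥0) * ((k:ℝ≥0)+1)^(2*(k+1)) ≤ ((k:ℝ≥0)+2)^(2*(k+1)) := by
    calc (3:ℝ≥0) * ((k:ℝ≥0)+1)^(2*(k+1)) ≤ 4 * ((k:ℝ≥0)+1)^(2*(k+1)) := by gcongr; norm_num
      _ = (2 * ((k:ℝ≥0)+1)^(k+1))^2 := by ring
      _ ≤ (((k:ℝ≥0)+2)^(k+1))^2 := by gcongr
      _ = _ := by ring
  have := NNReal.rpow_le_rpow (z := 1/((k:ℝ)+2)) hb2 (by positivity)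
  rw [NNReal.mul_rpow, ← NNReal.rpow_natCast, ← NNReal.rpow_natCast, ← NNReal.rpow_mul,
    ← NNReal.rpow_mul] at this
  push_cast at this
  rw [mul_one_div] at this
  exact this

theorem bh (n k : ℕ) (a : (Fin (k+1) → Fin n) → ℝ) (M : ℝ≥0)
    (hM : ∀ x : Fin (k+1) → Fin n → Bool, ‖∑ i, a i * ∏ j, sg (x j (i j))‖₊ ≤ M) :
    ∑ i, ‖a i‖₊ ^ (2 * ((k:ℝ)+1) / ((k:ℝ)+2)) ≤
      (((k:ℝ≥0)+1) * M) ^ (2 * ((k:ℝ)+1) / ((k:ℝ)+2)) := by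
  induction k with
  | zero =>
    have h := hM (fun _ t => decide (0 ≤ a (fun _ => t)))
    have e : ∀ i : Fin 1 → Fin n, a i * ∏ j, sg (decide (0 ≤ a (fun _ => i j))) = |a i| := by
      intro i
      have hi : (fun _ => i 0) = i := by funext l; rw [Subsingleton.elim l 0]
      simp only [Fin.prod_univ_succ, Fin.prod_univ_zero, mul_one, hi, sg]
      split_ifs with h0
      · rw [abs_of_nonneg (by simpa using h0), mul_one]
      · rw [abs_of_neg (by simpa using h0)]; ring
    simp only [e] at h
    norm_num
    rw [← NNReal.coe_le_coe] at h ⊢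
    push_cast at h ⊢
    exact (le_abs_self _).trans h
  | succ k ih =>
    set p : ℝ := 2 * ((k:ℝ)+1) / ((k:ℝ)+2) with hp
    have hp0 : 0 < p := by positivity
    have hp2 : p < 2 := by rw [hp, div_lt_iff₀ (by positivity)]; linarith
    have hpe : (2 - p) / 2 = 1 / ((k:ℝ)+2) := by rw [hp]; field_simp; ring
    -- restricted forms
    have hr : ∀ (j : Fin (k+2)) (x : Fin n → Bool),
        ∑ y : Fin (k+1) → Fin n, ‖∑ t, a (j.insertNth t y) * sg (x t)‖₊ ^ p ≤
          (((k:ℝ≥0)+1) * M) ^ p := by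
      intro j x
      refine ih (fun y => ∑ t, a (j.insertNth t y) * sg (x t)) ?_
      intro z
      refine le_trans (le_of_eq ?_) (hM (j.insertNth x z))
      congr 1
      rw [sum_insertNth j]
      refine Finset.sum_congr rfl fun y _ => ?_
      rw [Finset.sum_mul]
      refine Finset.sum_congr rfl fun t _ => ?_
      rw [Fin.prod_univ_succAbove _ j]
      simp only [Fin.insertNth_apply_same, Fin.insertNth_apply_succAbove]
      ring
    have hI := interp k (fun i => ‖a i‖₊)
      (fun j y => (∑ t, ‖a (j.insertNth t y)‖₊ ^ 2) ^ (1/2:ℝ))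
      (by intro j y; rw [← NNReal.rpow_mul]; norm_num)
      ((((k:ℝ≥0)+2) * M) ^ p) (by
        intro j
        refine le_trans ?_ (const_step k M)
        have h2 : (0:ℝ≥0) < 2 ^ n := by positivity
        refine le_of_mul_le_mul_left ?_ h2
        rw [Finset.mul_sum]
        calc _ ≤ ∑ y : Fin (k+1) → Fin n, (3:ℝ≥0) ^ ((2 - p) / 2) *
              ∑ x : Fin n → Bool, ‖∑ t, a (j.insertNth t y) * sg (x t)‖₊ ^ p := by
              refine Finset.sum_le_sum fun y _ => ?_
              have := khinchine n (fun t => a (j.insertNth t y)) p hp0 hp2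
              rw [← NNReal.rpow_mul]
              convert this using 3
              ring
          _ = (3:ℝ≥0) ^ ((2 - p) / 2) * ∑ x : Fin n → Bool,
                ∑ y : Fin (k+1) → Fin n, ‖∑ t, a (j.insertNth t y) * sg (x t)‖₊ ^ p := by
              rw [← Finset.mul_sum, Finset.sum_comm]
          _ ≤ (3:ℝ≥0) ^ ((2 - p) / 2) * ∑ x : Fin n → Bool, (((k:ℝ≥0)+1) * M) ^ p := by
              gcongr with x
              exact hr j x
          _ = _ := by
              rw [hpe, Finset.sum_const, nsmul_eq_mul]
              simp
              ring)
    rw [← NNReal.rpow_mul] at hI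
    have e1 : 2 * (((k+1:ℕ):ℝ)+1) / (((k+1:ℕ):ℝ)+2) = 2 * ((k:ℝ)+2) / ((k:ℝ)+3) := by
      push_cast; ring
    have e2 : p * (((k:ℝ)+2)^2 / (((k:ℝ)+1) * ((k:ℝ)+3))) = 2 * ((k:ℝ)+2) / ((k:ℝ)+3) := by
      rw [hp]; field_simp
    have e3 : (((k+1:ℕ):ℝ≥0)+1) = (k:ℝ≥0)+2 := by push_cast; ring
    rw [e1, e3]
    rw [e2] at hI
    exact hI

theorem l1_bound (n k : ℕ) (a : (Fin (k+1) → Fin n) → ℝ) (M : ℝ≥0)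
    (hM : ∀ x : Fin (k+1) → Fin n → Bool, ‖∑ i, a i * ∏ j, sg (x j (i j))‖₊ ≤ M) :
    ∑ i, ‖a i‖₊ ≤ ((k:ℝ≥0)+1) * M * (n:ℝ≥0) ^ ((k:ℝ)/2) := by
  have h := bh n k a M hM
  rcases Nat.eq_zero_or_pos k with rfl | hk
  · norm_num at h ⊢; exact h
  have hk' : (0:ℝ) < k := by exact_mod_cast hk
  have h3 := holder_two univ (fun i => ‖a i‖₊ ^ (2 * ((k:ℝ)+1) / ((k:ℝ)+2))) (fun _ => (1:ℝ≥0))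
    (((k:ℝ)+2) / (2 * ((k:ℝ)+1))) ((k:ℝ) / (2 * ((k:ℝ)+1))) (by positivity) (by positivity)
    (by field_simp; ring)
  have e : (2 * ((k:ℝ)+1) / ((k:ℝ)+2)) * (((k:ℝ)+2) / (2 * ((k:ℝ)+1))) = 1 := by field_simp
  simp only [← NNReal.rpow_mul, e, NNReal.rpow_one, NNReal.one_rpow, mul_one] at h3
  refine h3.trans ?_
  have h4 := NNReal.rpow_le_rpow (z := ((k:ℝ)+2) / (2 * ((k:ℝ)+1))) h (by positivity)
  rw [← NNReal.rpow_mul, e, NNReal.rpow_one] at h4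
  refine mul_le_mul' h4 (le_of_eq ?_)
  simp only [Finset.sum_const, Finset.card_univ, Fintype.card_fun, Fintype.card_fin, nsmul_eq_mul,
    mul_one, Nat.cast_pow]
  rw [← NNReal.rpow_natCast, ← NNReal.rpow_mul]
  congr 1
  push_cast
  field_simp

theorem xor_game_bias_lower_bound :
    ∃ c : ℝ, 0 < c ∧ ∀ k n : ℕ, 1 ≤ k → 1 ≤ n →
      ∀ dist A : (Fin k → Fin n) → ℝ,
      (∀ i, 0 ≤ dist i) → (∑ i : Fin k → Fin n, dist i) = 1 →
      (∀ i, A i = 1 ∨ A i = -1) →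
      ∃ x : Fin k → Fin n → Bool,
        c * (k : ℝ) ^ (-(3 : ℝ) / 2) * (n : ℝ) ^ (-((k : ℝ) - 1) / 2) ≤
          |∑ i : Fin k → Fin n, dist i * A i * ∏ j, (if x j (i j) then (1 : ℝ) else -1)| := by
  refine ⟨1, one_pos, ?_⟩
  intro k n hk hn dist A hd hsum hA
  obtain ⟨k, rfl⟩ : ∃ m, k = m + 1 := ⟨k - 1, by omega⟩
  obtain ⟨x, hx⟩ := Finite.exists_max (fun x : Fin (k+1) → Fin n → Bool =>
    ‖∑ i, (dist i * A i) * ∏ j, sg (x j (i j))‖₊)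
  refine ⟨x, ?_⟩
  have h := l1_bound n k (fun i => dist i * A i) _ hx
  rw [← NNReal.coe_le_coe] at h
  push_cast at h
  have hs : ∑ i, ‖dist i * A i‖ = 1 := by
    rw [← hsum]
    refine Finset.sum_congr rfl fun i _ => ?_
    rcases hA i with h | h <;> simp [h, abs_of_nonneg (hd i)]
  rw [hs, Real.norm_eq_abs] at h
  simp only [sg] at h
  set b := |∑ i : Fin (k+1) → Fin n, dist i * A i * ∏ j, (if x j (i j) then (1 : ℝ) else -1)|
  have hn0 : (0:ℝ) < n := by exact_mod_cast hn
  have hk1 : ((k+1:ℕ):ℝ) ^ (-(3 : ℝ) / 2) ≤ ((k:ℝ)+1)⁻¹ := by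
    push_cast
    rw [← Real.rpow_neg_one]
    exact Real.rpow_le_rpow_of_exponent_le (by linarith [(Nat.cast_nonneg k : (0:ℝ) ≤ k)]) (by norm_num)
  have hn1 : (n : ℝ) ^ (-(((k+1:ℕ) : ℝ) - 1) / 2) = ((n:ℝ) ^ ((k:ℝ)/2))⁻¹ := by
    rw [← Real.rpow_neg hn0.le]; congr 1; push_cast; ring
  rw [hn1, one_mul]
  have hQ : 0 < (n:ℝ) ^ ((k:ℝ)/2) := Real.rpow_pos_of_pos hn0 _
  calc _ ≤ ((k:ℝ)+1)⁻¹ * ((n:ℝ) ^ ((k:ℝ)/2))⁻¹ := by gcongr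
    _ ≤ ((k:ℝ)+1)⁻¹ * ((n:ℝ) ^ ((k:ℝ)/2))⁻¹ * (((k:ℝ) + 1) * b * (n:ℝ) ^ ((k:ℝ)/2)) :=
        le_mul_of_one_le_right (by positivity) h
    _ = b := by field_simp
end
end
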